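/- Dissipation estimate for horizontal derivatives of σ: Let (σ, u, β) be a sufficiently regular solution of the scaled perturbed Navier–Stokes–Korteweg system on Ω × (0,T) satisfying the Navier boundary conditions and σ|_{∂Ω} = ∂₃²σ|_{∂Ω} = 0. Then for all t ∈ (0,T): ‖σ‖_{1,2} ≲ κ⁻¹(‖∇Δu‖₀ + ‖σ‖_{1,2}‖σ‖₃) + (κ⁻¹ + κ⁻²‖σ‖₂)(‖u_t‖₁ + ‖u‖₂‖∇u‖₁). -/

import Mathlib

open MeasureTheory Set Filter Topology
open scoped ENNReal

noncomputable section

abbrev R3 : Type := Fin 3 → ℝ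

/-- The slab Ω = ℝ² × (0, h). -/
def slab (hh : ℝ) : Set R3 := {x | x 2 ∈ Set.Ioo 0 hh}

/-- The boundary ∂Ω = ℝ² × {0, h}. -/
def bdry (hh : ℝ) : Set R3 := {x | x 2 = 0 ∨ x 2 = hh}

/-- `i`-th standard basis vector of ℝ³. -/
def unitv (i : Fin 3) : R3 := fun j => if j = i then 1 else 0

/-- spatial partial derivative ∂ᵢ -/
def pd (i : Fin 3) (f : R3 → ℝ) : R3 → ℝ := fun x => fderiv ℝ f x (unitv i)

/-- iterated spatial partial derivatives -/
def pdL : List (Fin 3) → (R3 → ℝ) → R3 → ℝ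
  | [], f => f
  | i :: l, f => pd i (pdL l f)

/-- Laplacian -/
def lap (f : R3 → ℝ) : R3 → ℝ := fun x => ∑ i : Fin 3, pd i (pd i f) x

/-- horizontal Laplacian Δ_h -/
def laph (f : R3 → ℝ) : R3 → ℝ := fun x => pd 0 (pd 0 f) x + pd 1 (pd 1 f) x

/-- time derivative -/
def dt (f : ℝ → R3 → ℝ) : ℝ → R3 → ℝ := fun t x => deriv (fun s => f s x) t

/-- `j`-th component of a time dependent vector field -/
def uc (u : ℝ → R3 → Fin 3 → ℝ) (j : Fin 3) : ℝ → R3 → ℝ := fun t x => u t x j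

/-- squared L²(Ω) norm -/
def L2sq (hh : ℝ) (f : R3 → ℝ) : ℝ := ∫ x in slab hh, (f x) ^ 2

/-- squared Hᵏ(Ω) norm -/
def HSq (hh : ℝ) (k : ℕ) (f : R3 → ℝ) : ℝ :=
  ∑ n ∈ Finset.range (k + 1), ∑ α : Fin n → Fin 3, L2sq hh (pdL (List.ofFn α) f)

/-- Hᵏ(Ω) norm -/
def Hnorm (hh : ℝ) (k : ℕ) (f : R3 → ℝ) : ℝ := Real.sqrt (HSq hh k f)

/-- squared Hᵏ(Ω) norm of a vector field -/
def VHSq (hh : ℝ) (k : ℕ) (w : R3 → Fin 3 → ℝ) : ℝ := ∑ j : Fin 3, HSq hh k (fun x => w x j)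

def VHnorm (hh : ℝ) (k : ℕ) (w : R3 → Fin 3 → ℝ) : ℝ := Real.sqrt (VHSq hh k w)

/-- squared ‖∇w‖ₖ² -/
def GradSq (hh : ℝ) (k : ℕ) (w : R3 → Fin 3 → ℝ) : ℝ :=
  ∑ i : Fin 3, ∑ j : Fin 3, HSq hh k (pd i (fun x => w x j))

def GradNorm (hh : ℝ) (k : ℕ) (w : R3 → Fin 3 → ℝ) : ℝ := Real.sqrt (GradSq hh k w)

/-- iterate of a single partial derivative -/
def pdIter (i : Fin 3) : ℕ → (R3 → ℝ) → R3 → ℝ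
  | 0, f => f
  | n + 1, f => pd i (pdIter i n f)

/-- anisotropic norm ‖f‖_{i,l} = ∑_{α₁+α₂=i} ‖∂₁^{α₁}∂₂^{α₂} f‖_{H^l} -/
def anisoNorm (hh : ℝ) (i l : ℕ) (f : R3 → ℝ) : ℝ :=
  ∑ a ∈ Finset.range (i + 1), Hnorm hh l (pdIter 0 a (pdIter 1 (i - a) f))

/-- equilibrium density ρ̄(x) = x₃ + 1 -/
def rbar : R3 → ℝ := fun x => x 2 + 1

/-- perturbed density ρ = ρ̄ + κ⁻¹ σ -/
def rho (κ : ℝ) (σ : R3 → ℝ) : R3 → ℝ := fun x => rbar x + κ⁻¹ * σ x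

/-- The scaled perturbed incompressible NSK system at time `t` on the slab:
    σ_t + u·∇σ + κu₃ = 0,  ρ(u_t + u·∇u) + ∇β = μΔu − Δσ(κe³ + ∇σ),  div u = 0. -/
def NSK (hh μ κ : ℝ) (σ : ℝ → R3 → ℝ) (u : ℝ → R3 → Fin 3 → ℝ) (β : ℝ → R3 → ℝ)
    (t : ℝ) : Prop :=
  ∀ x ∈ slab hh,
    (dt σ t x + (∑ i : Fin 3, u t x i * pd i (σ t) x) + κ * u t x 2 = 0) ∧
    (∀ j : Fin 3,
      rho κ (σ t) x *
          (dt (uc u j) t x + ∑ i : Fin 3, u t x i * pd i (fun y => u t y j) x)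
        + pd j (β t) x
      = μ * lap (fun y => u t y j) x
        - lap (σ t) x * ((if j = 2 then κ else 0) + pd j (σ t) x)) ∧
    (∑ i : Fin 3, pd i (fun y => u t y i) x = 0)

/-- Navier(-slip) boundary conditions at time `t`. -/
def NavierBC (hh : ℝ) (u : ℝ → R3 → Fin 3 → ℝ) (t : ℝ) : Prop :=
  ∀ x ∈ bdry hh,
    u t x 2 = 0 ∧ pd 2 (fun y => u t y 0) x = 0 ∧ pd 2 (fun y => u t y 1) x = 0

/-- "sufficiently regular" time dependent scalar field: jointly smooth with all
    spatial derivatives (and their time derivatives) square integrable on the slab. -/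
def SReg (hh : ℝ) (f : ℝ → R3 → ℝ) : Prop :=
  ContDiff ℝ (⊤ : ℕ∞) (Function.uncurry f) ∧
  ∀ (t : ℝ) (l : List (Fin 3)),
    IntegrableOn (fun x => (pdL l (f t) x) ^ 2) (slab hh) volume ∧
    IntegrableOn (fun x => (pdL l (dt f t) x) ^ 2) (slab hh) volume

/-- "sufficiently regular" time dependent vector field -/
def VReg (hh : ℝ) (u : ℝ → R3 → Fin 3 → ℝ) : Prop := ∀ j : Fin 3, SReg hh (uc u j)

/-- regular (time independent) data with square integrable derivatives -/
def DReg (hh : ℝ) (f : R3 → ℝ) : Prop :=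
  ContDiff ℝ (⊤ : ℕ∞) f ∧ ∀ l : List (Fin 3), IntegrableOn (fun x => (pdL l f x) ^ 2) (slab hh) volume

/-- boundary conditions defining H³_ρ̄ (note ρ̄' = 1) -/
def BCh3 (hh κ : ℝ) (f : R3 → ℝ) : Prop :=
  ∀ x ∈ bdry hh, f x = 0 ∧ pd 2 (pd 2 f) x = 0 ∧ pd 2 f x = -κ

/-- divergence-free and boundary conditions defining ℋ²ₛ -/
def BCh2s (hh : ℝ) (w : R3 → Fin 3 → ℝ) : Prop :=
  (∀ x ∈ slab hh, ∑ i : Fin 3, pd i (fun y => w y i) x = 0) ∧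
  (∀ x ∈ bdry hh, w x 2 = 0 ∧ pd 2 (fun y => w y 0) x = 0 ∧ pd 2 (fun y => w y 1) x = 0)

/-- continuity in time with values in Hᵏ(Ω) -/
def ContH (hh : ℝ) (k : ℕ) (S : Set ℝ) (f : ℝ → R3 → ℝ) : Prop :=
  ∀ t₀ ∈ S,
    Tendsto (fun t => Hnorm hh k (fun x => f t x - f t₀ x)) (nhdsWithin t₀ S) (𝓝 0)

/-- membership in L²(0,T;Hᵏ) -/
def L2H (hh : ℝ) (k : ℕ) (T : ℝ) (f : ℝ → R3 → ℝ) : Prop :=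
  IntegrableOn (fun t => HSq hh k (f t)) (Set.Ioo 0 T) volume

/-- membership in 𝔓_T -/
def memP (hh κ T : ℝ) (σ : ℝ → R3 → ℝ) : Prop :=
  (∀ t ∈ Set.Icc (0:ℝ) T,
    (∀ l : List (Fin 3), l.length ≤ 3 →
      IntegrableOn (fun x => (pdL l (σ t) x) ^ 2) (slab hh) volume) ∧
    BCh3 hh κ (σ t)) ∧
  ContH hh 3 (Set.Icc 0 T) σ ∧ ContH hh 1 (Set.Icc 0 T) (dt σ) ∧ L2H hh 2 T (dt σ)

/-- membership in 𝒱_T -/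
def memV (hh T : ℝ) (u : ℝ → R3 → Fin 3 → ℝ) : Prop :=
  (∀ t ∈ Set.Icc (0:ℝ) T,
    (∀ (j : Fin 3) (l : List (Fin 3)), l.length ≤ 3 →
      IntegrableOn (fun x => (pdL l (fun y => u t y j) x) ^ 2) (slab hh) volume) ∧
    BCh2s hh (u t)) ∧
  (∀ j : Fin 3, ContH hh 2 (Set.Icc 0 T) (uc u j)) ∧
  (∀ j : Fin 3, L2H hh 3 T (uc u j)) ∧
  (∀ j : Fin 3, ContH hh 0 (Set.Icc 0 T) (dt (uc u j))) ∧
  (∀ j : Fin 3, L2H hh 1 T (dt (uc u j)))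

/-- the energy functional E(t) -/
def Efun (hh κ : ℝ) (σ : ℝ → R3 → ℝ) (u : ℝ → R3 → Fin 3 → ℝ) (t : ℝ) : ℝ :=
  HSq hh 3 (σ t) + VHSq hh 2 (u t) + κ ^ 2 * HSq hh 1 (fun x => u t x 2)
    + κ ^ 2 * (L2sq hh (laph (σ t)) + L2sq hh (pd 0 (pd 2 (σ t)))
        + L2sq hh (pd 1 (pd 2 (σ t))))

/-- E⁰, the energy functional evaluated on initial data -/
def E0fun (hh κ : ℝ) (σ0 : R3 → ℝ) (u0 : R3 → Fin 3 → ℝ) : ℝ :=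
  HSq hh 3 σ0 + VHSq hh 2 u0 + κ ^ 2 * HSq hh 1 (fun x => u0 x 2)
    + κ ^ 2 * (L2sq hh (laph σ0) + L2sq hh (pd 0 (pd 2 σ0)) + L2sq hh (pd 1 (pd 2 σ0)))

/-- the functional ℰ(t) -/
def EE (hh κ : ℝ) (σ : ℝ → R3 → ℝ) (u : ℝ → R3 → Fin 3 → ℝ) (t : ℝ) : ℝ :=
  HSq hh 1 (dt σ t) + (∑ j : Fin 3, L2sq hh (dt (uc u j) t)) + Efun hh κ σ u t

/-- the dissipation functional 𝒟(t) -/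
def DD (hh : ℝ) (σ : ℝ → R3 → ℝ) (u : ℝ → R3 → Fin 3 → ℝ) (t : ℝ) : ℝ :=
  (anisoNorm hh 1 2 (σ t)) ^ 2 + HSq hh 2 (dt σ t) + GradSq hh 2 (u t)
    + ∑ j : Fin 3, HSq hh 1 (dt (uc u j) t)

/-- ‖u_t‖ₖ -/
def utNorm (hh : ℝ) (k : ℕ) (u : ℝ → R3 → Fin 3 → ℝ) (t : ℝ) : ℝ :=
  Real.sqrt (∑ j : Fin 3, HSq hh k (dt (uc u j) t))

/-- embedding of the horizontal indices into Fin 3 -/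
def hi (a : Fin 2) : Fin 3 := ⟨a.1, by omega⟩

/-- good initial data: (σ⁰,u⁰) ∈ H³_ρ̄ × ℋ²ₛ, no vacuum, and smallness of E⁰ -/
def GoodData (hh κ d c₁ c₂ : ℝ) (σ0 : R3 → ℝ) (u0 : R3 → Fin 3 → ℝ) : Prop :=
  DReg hh σ0 ∧ (∀ j : Fin 3, DReg hh (fun x => u0 x j)) ∧
  BCh3 hh κ σ0 ∧ BCh2s hh u0 ∧
  (∀ x ∈ slab hh, d ≤ rbar x + κ⁻¹ * σ0 x) ∧
  E0fun hh κ σ0 u0 ≤ ((3 * c₁ * (max κ⁻¹ c₂) ^ 9)⁻¹) ^ 3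

/-- (σ,u,∇β) is a global strong solution with data (σ⁰,u⁰):
    initial condition, equations and boundary conditions for positive times, and
    (σ,u,∇β) ∈ 𝔓_T × 𝒱_T × C⁰([0,T],L²) for every T > 0. -/
def GlobalSol (hh μ κ : ℝ) (σ0 : R3 → ℝ) (u0 : R3 → Fin 3 → ℝ)
    (σ : ℝ → R3 → ℝ) (u : ℝ → R3 → Fin 3 → ℝ) (β : ℝ → R3 → ℝ) : Prop :=
  (∀ x ∈ slab hh, σ 0 x = σ0 x ∧ ∀ j : Fin 3, u 0 x j = u0 x j) ∧
  (∀ t : ℝ, 0 < t → NSK hh μ κ σ u β t ∧ NavierBC hh u t) ∧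
  (∀ T : ℝ, 0 < T → memP hh κ T σ ∧ memV hh T u ∧
    ∀ j : Fin 3, ContH hh 0 (Set.Icc 0 T) (fun t => pd j (β t)))

end


/-! ### Calculus of partial derivatives -/

lemma unitv_eq (i : Fin 3) : unitv i = Pi.single i (1:ℝ) := by
  ext j; simp [unitv, Pi.single_apply]

lemma pd_smooth {f : R3 → ℝ} (hf : ContDiff ℝ (⊤ : ℕ∞) f) (i : Fin 3) :
    ContDiff ℝ (⊤ : ℕ∞) (pd i f) := by
  unfold pd
  exact (hf.fderiv_right (by simp)).clm_apply contDiff_const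

lemma sm_diff {f : R3 → ℝ} (hf : ContDiff ℝ (⊤ : ℕ∞) f) : Differentiable ℝ f :=
  hf.differentiable (by simp)

lemma pd_add {f g : R3 → ℝ} (hf : ContDiff ℝ (⊤ : ℕ∞) f) (hg : ContDiff ℝ (⊤ : ℕ∞) g)
    (i : Fin 3) (x : R3) : pd i (fun y => f y + g y) x = pd i f x + pd i g x := by
  unfold pd
  rw [fderiv_fun_add (sm_diff hf x) (sm_diff hg x)]; rfl

lemma pd_sub {f g : R3 → ℝ} (hf : ContDiff ℝ (⊤ : ℕ∞) f) (hg : ContDiff ℝ (⊤ : ℕ∞) g)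
    (i : Fin 3) (x : R3) : pd i (fun y => f y - g y) x = pd i f x - pd i g x := by
  unfold pd
  rw [fderiv_fun_sub (sm_diff hf x) (sm_diff hg x)]; rfl

lemma pd_mul {f g : R3 → ℝ} (hf : ContDiff ℝ (⊤ : ℕ∞) f) (hg : ContDiff ℝ (⊤ : ℕ∞) g)
    (i : Fin 3) (x : R3) : pd i (fun y => f y * g y) x = pd i f x * g x + f x * pd i g x := by
  unfold pd
  rw [fderiv_fun_mul (sm_diff hf x) (sm_diff hg x)]
  simp; ring

lemma pd_cmul {f : R3 → ℝ} (hf : ContDiff ℝ (⊤ : ℕ∞) f) (c : ℝ)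
    (i : Fin 3) (x : R3) : pd i (fun y => c * f y) x = c * pd i f x := by
  unfold pd
  rw [fderiv_const_mul (sm_diff hf x)]; rfl

lemma pd_cadd {f : R3 → ℝ} (c : ℝ)
    (i : Fin 3) (x : R3) : pd i (fun y => c + f y) x = pd i f x := by
  unfold pd
  rw [fderiv_const_add]

lemma pd_sum {f : Fin 3 → R3 → ℝ} (hf : ∀ k, ContDiff ℝ (⊤ : ℕ∞) (f k))
    (i : Fin 3) (x : R3) : pd i (fun y => ∑ k, f k y) x = ∑ k, pd i (f k) x := by
  unfold pd
  rw [fderiv_fun_sum (fun k _ => sm_diff (hf k) x)]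
  simp

lemma pd_comm {f : R3 → ℝ} (hf : ContDiff ℝ (⊤ : ℕ∞) f) (i j : Fin 3) :
    pd i (pd j f) = pd j (pd i f) := by
  have key : ∀ (v w : R3) (x : R3), fderiv ℝ (fun y => fderiv ℝ f y v) x w
      = fderiv ℝ (fderiv ℝ f) x w v := by
    intro v w x
    have h1 : DifferentiableAt ℝ (fderiv ℝ f) x :=
      ((hf.fderiv_right (m := (⊤ : ℕ∞)) (by simp)).differentiable (by simp)) x
    rw [fderiv_clm_apply h1 (differentiableAt_const v)]
    simp
  funext x
  unfold pd
  rw [key, key]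
  have : IsSymmSndFDerivAt ℝ f x :=
    hf.contDiffAt.isSymmSndFDerivAt (by simp; exact WithTop.coe_le_coe.2 le_top)
  exact this _ _

lemma lap_smooth {f : R3 → ℝ} (hf : ContDiff ℝ (⊤ : ℕ∞) f) : ContDiff ℝ (⊤ : ℕ∞) (lap f) := by
  unfold lap
  exact ContDiff.sum fun i _ => pd_smooth (pd_smooth hf i) i

lemma pd_lap {f : R3 → ℝ} (hf : ContDiff ℝ (⊤ : ℕ∞) f) (j : Fin 3) :
    pd j (lap f) = lap (pd j f) := by
  funext x
  unfold lap
  rw [pd_sum (fun k => pd_smooth (pd_smooth hf k) k)]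
  refine Finset.sum_congr rfl fun i _ => ?_
  rw [pd_comm (pd_smooth hf i) j i, pd_comm hf j i]

/-- restriction of a smooth function to a line -/
lemma line_deriv {f : R3 → ℝ} (hf : ContDiff ℝ (⊤ : ℕ∞) f) (x v : R3) (s : ℝ) :
    HasDerivAt (fun r : ℝ => f (fun i => x i + r * v i))
      (∑ i, v i * pd i f (fun i => x i + s * v i)) s := by
  have h1 : HasDerivAt (fun r : ℝ => (fun i => x i + r * v i : R3)) v s := by
    rw [hasDerivAt_pi]
    intro i
    simpa using ((hasDerivAt_id s).mul_const (v i)).const_add (x i)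
  have h2 := (sm_diff hf (fun i => x i + s * v i)).hasFDerivAt.comp_hasDerivAt s h1
  have h3 : v = ∑ i, v i • unitv i := by
    ext j; simp [unitv, Finset.sum_apply]
  have h4 : ∑ i, v i * pd i f (fun i => x i + s * v i)
      = (fderiv ℝ f fun i => x i + s * v i) v := by
    have h5 := congrArg (fderiv ℝ f fun i => x i + s * v i) h3
    rw [map_sum] at h5
    rw [h5]
    simp [pd]
  rw [h4]
  exact h2

lemma coord_deriv {f : R3 → ℝ} (hf : ContDiff ℝ (⊤ : ℕ∞) f) (x : R3) (i : Fin 3) (s : ℝ) :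
    HasDerivAt (fun r : ℝ => f (Function.update x i r)) (pd i f (Function.update x i s)) s := by
  have h1 : HasDerivAt (fun r : ℝ => Function.update x i r) (unitv i) s := by
    rw [unitv_eq]; exact hasDerivAt_update x i s
  exact (sm_diff hf _).hasFDerivAt.comp_hasDerivAt s h1

lemma pd_bdry {hh : ℝ} {f : R3 → ℝ} (hf : ContDiff ℝ (⊤ : ℕ∞) f) (h0 : ∀ x ∈ bdry hh, f x = 0)
    (i : Fin 3) (hi : i ≠ 2) : ∀ x ∈ bdry hh, pd i f x = 0 := by
  intro x hx
  have h1 := coord_deriv hf x i (x i)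
  rw [Function.update_eq_self] at h1
  have h2 : (fun r : ℝ => f (Function.update x i r)) = fun _ => 0 := by
    funext r
    apply h0
    simpa [bdry, Function.update_of_ne hi.symm] using hx
  rw [h2] at h1
  exact h1.unique (hasDerivAt_const _ _)

lemma slab_meas (hh : ℝ) : MeasurableSet (slab hh) := by
  unfold slab
  exact measurableSet_Ioo.preimage (measurable_pi_apply 2)

lemma slab_open (hh : ℝ) : IsOpen (slab hh) := by
  unfold slab
  exact isOpen_Ioo.preimage (continuous_apply 2)

/-! ### Regularity -/

lemma pdL_append (l : List (Fin 3)) (i : Fin 3) (f : R3 → ℝ) :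
    pdL (l ++ [i]) f = pdL l (pd i f) := by
  induction l with
  | nil => rfl
  | cons j l ih => simp [pdL, ih]

lemma DReg.pd {hh : ℝ} {f : R3 → ℝ} (hf : DReg hh f) (i : Fin 3) : DReg hh (pd i f) :=
  ⟨pd_smooth hf.1 i, fun l => by rw [← pdL_append]; exact hf.2 _⟩

lemma DReg.sq {hh : ℝ} {f : R3 → ℝ} (hf : DReg hh f) :
    IntegrableOn (fun x => f x ^ 2) (slab hh) volume := hf.2 []

lemma SReg.dreg {hh : ℝ} {f : ℝ → R3 → ℝ} (hf : SReg hh f) (t : ℝ) : DReg hh (f t) := by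
  refine ⟨?_, fun l => (hf.2 t l).1⟩
  have : f t = Function.uncurry f ∘ fun x => (t, x) := rfl
  rw [this]
  exact hf.1.comp (contDiff_const.prodMk contDiff_id)

lemma SReg.dt {hh : ℝ} {f : ℝ → R3 → ℝ} (hf : SReg hh f) (t : ℝ) : DReg hh (dt f t) := by
  refine ⟨?_, fun l => (hf.2 t l).2⟩
  have : _root_.dt f t = fun x => fderiv ℝ (Function.uncurry f) (t, x) (1, 0) := by
    funext x
    have h1 : HasDerivAt (fun s : ℝ => (s, x)) ((1 : ℝ), (0 : R3)) t :=
      (hasDerivAt_id t).prodMk (hasDerivAt_const t x)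
    have h2 := (hf.1.differentiable (by simp) (t, x)).hasFDerivAt.comp_hasDerivAt t h1
    exact h2.deriv
  rw [this]
  have h3 : ContDiff ℝ (⊤ : ℕ∞) (fderiv ℝ (Function.uncurry f)) := hf.1.fderiv_right (by simp)
  exact (h3.comp (contDiff_const.prodMk contDiff_id)).clm_apply contDiff_const

lemma DReg.mul_int {hh : ℝ} {f g : R3 → ℝ} (hf : DReg hh f) (hg : DReg hh g) :
    IntegrableOn (fun x => f x * g x) (slab hh) volume := by
  refine Integrable.mono' (hf.sq.add hg.sq)
    (hf.1.continuous.mul hg.1.continuous).aestronglyMeasurable (ae_of_all _ fun x => ?_)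
  simp only [Pi.add_apply, Real.norm_eq_abs]
  rw [abs_mul]
  nlinarith [sq_nonneg (|f x| - |g x|), sq_abs (f x), sq_abs (g x)]

/-! ### Integration by parts on the slab -/

lemma int_pd_zero {hh : ℝ} (hhh : 0 < hh) {F : R3 → ℝ} (hF : ContDiff ℝ (⊤ : ℕ∞) F) (i : Fin 3)
    (h1 : IntegrableOn F (slab hh) volume) (h2 : IntegrableOn (pd i F) (slab hh) volume)
    (hb : i = 2 → ∀ x ∈ bdry hh, F x = 0) : ∫ x in slab hh, pd i F x = 0 := by
  have mp := (volume_preserving_piFinSuccAbove (fun _ : Fin 3 => ℝ) i).symm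
  rw [← integral_indicator (slab_meas hh)]
  rw [← integrable_indicator_iff (slab_meas hh)] at h1 h2
  have e1 := mp.integrable_comp_of_integrable h1
  have e2 := mp.integrable_comp_of_integrable h2
  rw [← mp.integral_comp' ]
  rw [Measure.volume_eq_prod] at e1 e2 ⊢
  have e3 := e1.prod_left_ae
  have e4 := e2.prod_left_ae
  refine (integral_prod_symm _ e2).trans ?_
  apply integral_eq_zero_of_ae
  filter_upwards [e3, e4] with y hy1 hy2
  have hup : ∀ t : ℝ, (MeasurableEquiv.piFinSuccAbove (fun _ : Fin 3 => ℝ) i).symm (t, y)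
      = Function.update (i.insertNth (α := fun _ => ℝ) 0 y) i t := by
    intro t
    simp [MeasurableEquiv.piFinSuccAbove, Fin.insertNthEquiv]
  simp only [Function.comp_def, hup, Pi.zero_apply] at hy1 hy2 ⊢
  set x : R3 := (i.insertNth (α := fun _ => ℝ) 0 y) with hx
  by_cases hi : i = 2
  · subst hi
    have key : ∀ (G : R3 → ℝ) , (fun t => (slab hh).indicator G (Function.update x 2 t))
        = (Ioo 0 hh).indicator (fun t => G (Function.update x 2 t)) := by
      intro G
      funext t
      simp [Set.indicator, slab]
    rw [key, integral_indicator measurableSet_Ioo, ← integral_Ioc_eq_integral_Ioo,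
      ← intervalIntegral.integral_of_le hhh.le]
    rw [intervalIntegral.integral_eq_sub_of_hasDerivAt (f := fun t => F (Function.update x 2 t))
      (fun t _ => coord_deriv hF x 2 t)]
    · rw [hb rfl _ (by simp [bdry]), hb rfl _ (by simp [bdry])]; simp
    · apply Continuous.intervalIntegrable
      exact (pd_smooth hF 2).continuous.comp (continuous_const.update 2 continuous_id)
  · have hs : ∀ t, Function.update x i t ∈ slab hh ↔ x ∈ slab hh := by
      intro t
      simp [slab, Function.update_of_ne (Ne.symm hi)]
    by_cases hxs : x ∈ slab hh
    · simp only [Set.indicator, hs, hxs, if_true] at hy1 hy2 ⊢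
      exact integral_eq_zero_of_hasDerivAt_of_integrable (fun t => coord_deriv hF x i t) hy2 hy1
    · simp [Set.indicator, hs, hxs]

lemma ibp {hh : ℝ} (hhh : 0 < hh) {f g : R3 → ℝ} (hf : DReg hh f) (hg : DReg hh g) (i : Fin 3)
    (hb : i = 2 → ∀ x ∈ bdry hh, f x = 0) :
    ∫ x in slab hh, f x * pd i g x = - ∫ x in slab hh, pd i f x * g x := by
  have h := int_pd_zero hhh (hf.1.mul hg.1) i (hf.mul_int hg) ?_ ?_
  · simp only [pd_mul hf.1 hg.1] at h
    rw [integral_add ((hf.pd i).mul_int hg) (hf.mul_int (hg.pd i))] at h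
    linarith
  · have := ((hf.pd i).mul_int hg).add (hf.mul_int (hg.pd i))
    refine this.congr (ae_of_all _ fun x => ?_)
    exact (pd_mul hf.1 hg.1 i x).symm
  · intro hi x hx
    simp [hb hi x hx]

/-! ### Elliptic estimate -/

lemma L2sq_nonneg' (hh : ℝ) (f : R3 → ℝ) : 0 ≤ L2sq hh f :=
  integral_nonneg fun _ => sq_nonneg _

lemma DReg.lap {hh : ℝ} {f : R3 → ℝ} (hf : DReg hh f) :
    IntegrableOn (fun x => lap f x ^ 2) (slab hh) volume := by
  refine Integrable.mono' (((((hf.pd 0).pd 0).sq.add ((hf.pd 1).pd 1).sq).add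
    ((hf.pd 2).pd 2).sq).const_mul 3)
    ((lap_smooth hf.1).continuous.pow 2).aestronglyMeasurable (ae_of_all _ fun x => ?_)
  simp only [Pi.add_apply, Real.norm_eq_abs]
  rw [abs_of_nonneg (sq_nonneg _)]
  simp only [_root_.lap, Fin.sum_univ_three]
  nlinarith [sq_nonneg (_root_.pd 0 (_root_.pd 0 f) x - _root_.pd 1 (_root_.pd 1 f) x),
    sq_nonneg (_root_.pd 0 (_root_.pd 0 f) x - _root_.pd 2 (_root_.pd 2 f) x),
    sq_nonneg (_root_.pd 1 (_root_.pd 1 f) x - _root_.pd 2 (_root_.pd 2 f) x)]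

lemma pd_coord (x : R3) : pd 2 (fun y : R3 => y 2) x = 1 := by
  unfold pd
  rw [show (fun y : R3 => y 2) = (ContinuousLinearMap.proj (R := ℝ) (φ := fun _ : Fin 3 => ℝ) 2)
    from rfl, ContinuousLinearMap.fderiv]
  simp [unitv]

lemma coord_smooth : ContDiff ℝ (⊤ : ℕ∞) (fun y : R3 => y 2) := contDiff_apply ℝ ℝ 2

lemma poincare {hh : ℝ} (hhh : 0 < hh) {w : R3 → ℝ} (hw : DReg hh w)
    (hb : ∀ x ∈ bdry hh, w x = 0) : L2sq hh w ≤ 4 * hh ^ 2 * L2sq hh (pd 2 w) := by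
  have hc : ∀ x, pd 2 (fun y => y 2 * (w y * w y)) x = w x ^ 2 + 2 * (x 2 * (w x * pd 2 w x)) := by
    intro x
    rw [pd_mul coord_smooth (hw.1.mul hw.1), pd_mul hw.1 hw.1, pd_coord]; ring
  have bdd : ∀ x ∈ slab hh, ∀ r : ℝ, |x 2 * r| ≤ hh * |r| := by
    intro x hx r
    rw [abs_mul]
    have := hx.1; have := hx.2
    exact mul_le_mul_of_nonneg_right (by rw [abs_le]; constructor <;> linarith) (abs_nonneg _)
  have hI : ∀ g : R3 → ℝ, DReg hh g →
      IntegrableOn (fun x => x 2 * (w x * g x)) (slab hh) volume := by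
    intro g hg
    refine Integrable.mono' ((hw.mul_int hg).norm.const_mul hh)
      (coord_smooth.continuous.mul (hw.1.continuous.mul hg.1.continuous)).aestronglyMeasurable ?_
    refine (ae_restrict_iff' (slab_meas hh)).2 (ae_of_all _ fun x hx => ?_)
    exact bdd x hx _
  have h := int_pd_zero hhh (coord_smooth.mul (hw.1.mul hw.1)) 2 (hI w hw) ?_ ?_
  · simp only [hc] at h
    rw [integral_add hw.sq ((hI _ (hw.pd 2)).const_mul 2)] at h
    have h2 : ∫ x in slab hh, -(2 * (x 2 * (w x * pd 2 w x)))
        ≤ ∫ x in slab hh, ((1 / 2) * w x ^ 2 + 2 * hh ^ 2 * (pd 2 w x) ^ 2) := by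
      refine setIntegral_mono_on ((hI _ (hw.pd 2)).const_mul 2).neg
        ((hw.sq.const_mul _).add ((hw.pd 2).sq.const_mul _)) (slab_meas hh) fun x hx => ?_
      have := bdd x hx (w x * pd 2 w x)
      rw [abs_mul (w x)] at this
      have h3 := neg_abs_le (x 2 * (w x * pd 2 w x))
      nlinarith [sq_nonneg (|w x| - 2 * hh * |pd 2 w x|), sq_abs (w x), sq_abs (pd 2 w x)]
    rw [integral_neg, integral_add (hw.sq.const_mul _) ((hw.pd 2).sq.const_mul _)] at h2
    simp only [integral_const_mul] at h h2
    unfold L2sq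
    linarith
  · have := hw.sq.add ((hI _ (hw.pd 2)).const_mul 2)
    exact this.congr (ae_of_all _ fun x => (hc x).symm)
  · intro _ x hx
    simp [hb x hx]

lemma grad_bound {hh : ℝ} (hhh : 0 < hh) {w : R3 → ℝ} (hw : DReg hh w)
    (hb : ∀ x ∈ bdry hh, w x = 0) :
    ∑ i, L2sq hh (pd i w) ≤ 4 * hh ^ 2 * L2sq hh (lap w) := by
  have h1 : ∀ i, L2sq hh (pd i w) = - ∫ x in slab hh, w x * pd i (pd i w) x := by
    intro i
    rw [ibp hhh hw (hw.pd i) i (fun _ => hb), neg_neg]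
    simp [L2sq, sq]
  have h2 : ∑ i, L2sq hh (pd i w) = ∫ x in slab hh, -(w x * lap w x) := by
    simp only [h1, lap, Finset.mul_sum]
    rw [integral_neg, integral_finsetSum _ (fun i _ => hw.mul_int ((hw.pd i).pd i)),
      Finset.sum_neg_distrib]
  have h3 : ∫ x in slab hh, -(w x * lap w x)
      ≤ ∫ x in slab hh, ((1 / (8 * hh ^ 2)) * w x ^ 2 + 2 * hh ^ 2 * (lap w x) ^ 2) := by
    refine integral_mono ?_ ((hw.sq.const_mul _).add (hw.lap.const_mul _)) fun x => ?_
    · refine Integrable.mono' (hw.sq.add hw.lap)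
        (hw.1.continuous.mul (lap_smooth hw.1).continuous).neg.aestronglyMeasurable
        (ae_of_all _ fun x => ?_)
      simp only [Pi.add_apply, Real.norm_eq_abs]
      rw [abs_neg, abs_mul]
      nlinarith [sq_nonneg (|w x| - |lap w x|), sq_abs (w x), sq_abs (lap w x)]
    · have h7 : (1 / (8 * hh ^ 2)) * w x ^ 2 + 2 * hh ^ 2 * (lap w x) ^ 2 + w x * lap w x
          = (1 / (8 * hh ^ 2)) * (w x + 4 * hh ^ 2 * lap w x) ^ 2 := by
        field_simp; ring
      have h8 : 0 ≤ (1 / (8 * hh ^ 2)) * (w x + 4 * hh ^ 2 * lap w x) ^ 2 := by positivity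
      simp only
      linarith
  rw [integral_add (hw.sq.const_mul _) (hw.lap.const_mul _),
      integral_const_mul, integral_const_mul (2 * hh ^ 2)] at h3
  have h4 := poincare hhh hw hb
  have h5 : L2sq hh (pd 2 w) ≤ ∑ i, L2sq hh (pd i w) :=
    Finset.single_le_sum (f := fun i => L2sq hh (pd i w)) (fun i _ => L2sq_nonneg' _ _)
      (Finset.mem_univ 2)
  have h6 : (1 / (8 * hh ^ 2)) * L2sq hh w ≤ (1 / 2) * L2sq hh (pd 2 w) := by
    calc (1 / (8 * hh ^ 2)) * L2sq hh w ≤ (1 / (8 * hh ^ 2)) * (4 * hh ^ 2 * L2sq hh (pd 2 w)) := by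
          gcongr
      _ = _ := by field_simp; ring
  unfold L2sq at *
  linarith

lemma hess_pair {hh : ℝ} (hhh : 0 < hh) {w : R3 → ℝ} (hw : DReg hh w)
    (hb : ∀ x ∈ bdry hh, w x = 0) (i j : Fin 3) :
    ∫ x in slab hh, pd i (pd i w) x * pd j (pd j w) x = L2sq hh (pd i (pd j w)) := by
  have main : ∀ i j : Fin 3, i ≠ 2 →
      ∫ x in slab hh, pd i (pd i w) x * pd j (pd j w) x = L2sq hh (pd i (pd j w)) := by
    intro i j hi
    have h1 := ibp hhh (hw.pd i) ((hw.pd j).pd j) i (fun h => absurd h hi)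
    have h2 := ibp hhh (hw.pd i) ((hw.pd i).pd j) j (fun _ => pd_bdry hw.1 hb i hi)
    have e : pd i (pd j (pd j w)) = pd j (pd j (pd i w)) := by
      rw [pd_comm (pd_smooth hw.1 j) i j, pd_comm hw.1 i j]
    rw [e, h2] at h1
    rw [pd_comm hw.1 i j]
    simp only [L2sq, sq]
    linarith
  by_cases hi : i = 2
  · by_cases hj : j = 2
    · subst hi hj; simp [L2sq, sq]
    · rw [pd_comm hw.1 i j, ← main j i hj]
      simp only [mul_comm]
  · exact main i j hi

lemma hess_bound {hh : ℝ} (hhh : 0 < hh) {w : R3 → ℝ} (hw : DReg hh w)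
    (hb : ∀ x ∈ bdry hh, w x = 0) :
    ∑ i, ∑ j, L2sq hh (pd i (pd j w)) = L2sq hh (lap w) := by
  simp only [← hess_pair hhh hw hb]
  simp only [L2sq, lap, sq, Finset.sum_mul_sum]
  rw [integral_finsetSum]
  · refine Finset.sum_congr rfl fun i _ => ?_
    rw [integral_finsetSum]
    exact fun j _ => ((hw.pd i).pd i).mul_int ((hw.pd j).pd j)
  · exact fun i _ => integrable_finsetSum _ fun j _ =>
      ((hw.pd i).pd i).mul_int ((hw.pd j).pd j)

lemma elliptic {hh : ℝ} (hhh : 0 < hh) {w : R3 → ℝ} (hw : DReg hh w)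
    (hb : ∀ x ∈ bdry hh, w x = 0) :
    L2sq hh w + ∑ i, L2sq hh (pd i w) + ∑ i, ∑ j, L2sq hh (pd i (pd j w))
      ≤ (16 * hh ^ 4 + 4 * hh ^ 2 + 1) * L2sq hh (lap w) := by
  have h1 := poincare hhh hw hb
  have h2 := grad_bound hhh hw hb
  have h3 := hess_bound hhh hw hb
  have h5 : L2sq hh (pd 2 w) ≤ ∑ i, L2sq hh (pd i w) :=
    Finset.single_le_sum (f := fun i => L2sq hh (pd i w)) (fun i _ => L2sq_nonneg' _ _)
      (Finset.mem_univ 2)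
  have h6 : 4 * hh ^ 2 * L2sq hh (pd 2 w) ≤ 4 * hh ^ 2 * (4 * hh ^ 2 * L2sq hh (lap w)) :=
    mul_le_mul_of_nonneg_left (h5.trans h2) (by positivity)
  rw [h3]
  nlinarith

/-! ### Tools for lower integrals -/

lemma cs_lint {α : Type*} [MeasurableSpace α] (μ : Measure α) {f g : α → ℝ≥0∞}
    (hf : AEMeasurable f μ) (hg : AEMeasurable g μ) :
    (∫⁻ x, f x * g x ∂μ) ^ 2 ≤ (∫⁻ x, f x ^ 2 ∂μ) * ∫⁻ x, g x ^ 2 ∂μ := by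
  have h := ENNReal.lintegral_mul_le_Lp_mul_Lq μ Real.HolderConjugate.two_two hf hg
  simp only [Pi.mul_apply, ENNReal.rpow_two] at h
  calc (∫⁻ x, f x * g x ∂μ) ^ 2
      ≤ ((∫⁻ x, f x ^ 2 ∂μ) ^ (1 / (2:ℝ)) * (∫⁻ x, g x ^ 2 ∂μ) ^ (1 / (2:ℝ))) ^ 2 := by
        gcongr
    _ = _ := by
        rw [mul_pow, ← ENNReal.rpow_two, ← ENNReal.rpow_two, ← ENNReal.rpow_mul,
          ← ENNReal.rpow_mul]
        norm_num

lemma vec_meas : Measurable (fun p : ℝ × ℝ × ℝ => (![p.2.2, p.2.1, p.1] : R3)) := by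
  rw [measurable_pi_iff]
  intro i
  fin_cases i <;> simp <;> fun_prop

lemma triple (hh : ℝ) {F : R3 → ℝ≥0∞} (hF : Measurable F) :
    ∫⁻ x in slab hh, F x = ∫⁻ c in Ioo 0 hh, ∫⁻ b, ∫⁻ a, F ![a, b, c] := by
  have mp := (volume_preserving_piFinSuccAbove (fun _ : Fin 3 => ℝ) 2).symm
  have mp2 := (volume_preserving_finTwoArrow ℝ).symm
  rw [← lintegral_indicator (slab_meas hh), ← lintegral_indicator measurableSet_Ioo]
  have hFm : Measurable ((slab hh).indicator F) := hF.indicator (slab_meas hh)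
  rw [← mp.lintegral_comp hFm, Measure.volume_eq_prod, lintegral_prod]
  · refine lintegral_congr fun c => ?_
    rw [← mp2.lintegral_comp, Measure.volume_eq_prod, lintegral_prod_symm]
    · have hv : ∀ a b : ℝ, (MeasurableEquiv.piFinSuccAbove (fun _ : Fin 3 => ℝ) 2).symm
          (c, MeasurableEquiv.finTwoArrow.symm (a, b)) = ![a, b, c] := by
        intro a b
        ext i
        fin_cases i <;> rfl
      simp only [hv]
      by_cases hc : c ∈ Ioo 0 hh
      · rw [indicator_of_mem hc]
        refine lintegral_congr fun b => lintegral_congr fun a => ?_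
        rw [indicator_of_mem]
        simpa [slab] using hc
      · rw [indicator_of_notMem hc]
        have : ∀ a b : ℝ, (slab hh).indicator F ![a, b, c] = 0 := by
          intro a b
          rw [indicator_of_notMem]
          simpa [slab] using hc
        simp [this]
    · refine Measurable.aemeasurable ?_
      exact hFm.comp (mp.measurable.comp (measurable_const.prodMk mp2.measurable))
    · exact hFm.comp (mp.measurable.comp (measurable_const.prodMk measurable_id))
  · exact (hFm.comp mp.measurable).aemeasurable

/-- one dimensional bound -/
lemma oneD {g g' : ℝ → ℝ} (hg : ∀ s, HasDerivAt g (g' s) s) (hg' : Continuous g')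
    {p q c : ℝ} (hpq : p < q) (hc : c ∈ Icc p q) :
    ENNReal.ofReal (g c ^ 2)
      ≤ ∫⁻ s in Ioo p q, ENNReal.ofReal (|g s| * ((q - p)⁻¹ * |g s| + 2 * |g' s|)) := by
  have gc : Continuous g := continuous_iff_continuousAt.2 fun s => (hg s).continuousAt
  have hcont : Continuous fun s => |g s| * ((q - p)⁻¹ * |g s| + 2 * |g' s|) := by fun_prop
  have hqp : 0 < q - p := by linarith
  rw [← ofReal_integral_eq_lintegral_ofReal]
  rotate_left
  · exact (hcont.integrableOn_Icc (a := p) (b := q)).mono_set Ioo_subset_Icc_self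
  · exact ae_of_all _ fun s => by positivity
  apply ENNReal.ofReal_le_ofReal
  rw [← integral_Ioc_eq_integral_Ioo, ← intervalIntegral.integral_of_le hpq.le]
  set l : ℝ := ∫ s in p..q, 2 * (|g s| * |g' s|) with hl
  have hlc : Continuous fun s => 2 * (|g s| * |g' s|) := by fun_prop
  have key : ∀ r ∈ Icc p q, g c ^ 2 - l ≤ g r ^ 2 := by
    intro r hr
    have h1 : ∫ s in r..c, 2 * (g s * g' s) = g c ^ 2 - g r ^ 2 := by
      refine intervalIntegral.integral_eq_sub_of_hasDerivAt (f := fun s => g s ^ 2) ?_ ?_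
      · intro s _
        refine ((hg s).fun_pow 2).congr_deriv ?_
        norm_num
        ring
      · exact Continuous.intervalIntegrable (by fun_prop) _ _
    have h2 : ‖∫ s in r..c, 2 * (g s * g' s)‖ ≤ |∫ s in r..c, 2 * (|g s| * |g' s|)| := by
      refine (intervalIntegral.norm_integral_le_abs_integral_norm).trans_eq ?_
      congr 1
      refine intervalIntegral.integral_congr fun s _ => ?_
      simp
    have h3 : |∫ s in r..c, 2 * (|g s| * |g' s|)| ≤ l := by
      have h4 : ∀ a b : ℝ, a ∈ Icc p q → b ∈ Icc p q → a ≤ b →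
          |∫ s in a..b, 2 * (|g s| * |g' s|)| ≤ l := by
        intro a b ha hb hab
        rw [abs_of_nonneg (intervalIntegral.integral_nonneg hab fun s _ => by positivity)]
        exact intervalIntegral.integral_mono_interval ha.1 hab hb.2
          (ae_of_all _ fun s => by positivity) (hlc.intervalIntegrable _ _)
      rcases le_total r c with h | h
      · exact h4 r c hr hc h
      · rw [intervalIntegral.integral_symm, abs_neg]
        exact h4 c r hc hr h
    rw [h1] at h2
    have := (le_abs_self _).trans (h2.trans h3)
    linarith
  have h5 : ∫ s in p..q, (g c ^ 2 - l) ≤ ∫ s in p..q, g s ^ 2 :=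
    intervalIntegral.integral_mono_on hpq.le (continuous_const.intervalIntegrable _ _)
      ((gc.pow 2).intervalIntegrable _ _) key
  rw [intervalIntegral.integral_const, smul_eq_mul] at h5
  have h6 : ∫ s in p..q, |g s| * ((q - p)⁻¹ * |g s| + 2 * |g' s|)
      = (q - p)⁻¹ * (∫ s in p..q, g s ^ 2) + l := by
    rw [hl, ← intervalIntegral.integral_const_mul, ← intervalIntegral.integral_add]
    · refine intervalIntegral.integral_congr fun s _ => ?_
      rw [← sq_abs (g s)]; ring
    · exact Continuous.intervalIntegrable (by fun_prop) _ _
    · exact Continuous.intervalIntegrable (by fun_prop) _ _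
  rw [h6]
  have h7 : g c ^ 2 - l ≤ (q - p)⁻¹ * ∫ s in p..q, g s ^ 2 := by
    rw [le_inv_mul_iff₀ hqp]; exact h5
  linarith

/-! ### Sobolev type bounds on the slab -/

/-- squared L² norm as a lower integral -/
noncomputable def JJ (hh : ℝ) (f : R3 → ℝ) : ℝ≥0∞ := ∫⁻ x in slab hh, ENNReal.ofReal (f x ^ 2)

/-- squared H¹ norm -/
noncomputable def HH1 (hh : ℝ) (f : R3 → ℝ) : ℝ≥0∞ := JJ hh f + ∑ i, JJ hh (pd i f)

/-- squared H² norm -/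
noncomputable def HH2 (hh : ℝ) (f : R3 → ℝ) : ℝ≥0∞ :=
  HH1 hh f + ∑ i, ∑ j, JJ hh (pd i (pd j f))

lemma vec0 {f : R3 → ℝ} (hf : ContDiff ℝ (⊤ : ℕ∞) f) (b c s : ℝ) :
    HasDerivAt (fun r : ℝ => f ![r, b, c]) (pd 0 f ![s, b, c]) s := by
  have h := coord_deriv hf ![0, b, c] 0 s
  have e : ∀ r : ℝ, Function.update (![0, b, c] : R3) 0 r = ![r, b, c] := by
    intro r; ext i; fin_cases i <;> simp [Function.update]
  simpa only [e] using h

lemma vec1 {f : R3 → ℝ} (hf : ContDiff ℝ (⊤ : ℕ∞) f) (a c s : ℝ) :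
    HasDerivAt (fun r : ℝ => f ![a, r, c]) (pd 1 f ![a, s, c]) s := by
  have h := coord_deriv hf ![a, 0, c] 1 s
  have e : ∀ r : ℝ, Function.update (![a, 0, c] : R3) 1 r = ![a, r, c] := by
    intro r; ext i; fin_cases i <;> simp [Function.update]
  simpa only [e] using h

lemma vec2 {f : R3 → ℝ} (hf : ContDiff ℝ (⊤ : ℕ∞) f) (a b s : ℝ) :
    HasDerivAt (fun r : ℝ => f ![a, b, r]) (pd 2 f ![a, b, s]) s := by
  have h := coord_deriv hf ![a, b, 0] 2 s
  have e : ∀ r : ℝ, Function.update (![a, b, 0] : R3) 2 r = ![a, b, r] := by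
    intro r; ext i; fin_cases i <;> simp [Function.update]
  simpa only [e] using h

lemma vec_cont : Continuous (fun p : ℝ × ℝ × ℝ => (![p.2.2, p.2.1, p.1] : R3)) := by
  rw [continuous_pi_iff]
  intro i
  fin_cases i <;> simp <;> fun_prop

lemma meas_vec {F : R3 → ℝ≥0∞} (hF : Measurable F) {α : Type*} [MeasurableSpace α]
    {a b c : α → ℝ} (ha : Measurable a) (hb : Measurable b) (hc : Measurable c) :
    Measurable fun z => F ![a z, b z, c z] :=
  hF.comp (vec_meas.comp (hc.prodMk (hb.prodMk ha)))

lemma cont_vec {F : R3 → ℝ} (hF : Continuous F) {α : Type*} [TopologicalSpace α]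
    {a b c : α → ℝ} (ha : Continuous a) (hb : Continuous b) (hc : Continuous c) :
    Continuous fun z => F ![a z, b z, c z] :=
  hF.comp (vec_cont.comp (hc.prodMk (hb.prodMk ha)))

/-- Tonelli with the vertical variable innermost. -/
lemma triple' (hh : ℝ) {F : R3 → ℝ≥0∞} (hF : Measurable F) :
    ∫⁻ b, ∫⁻ a, ∫⁻ c in Ioo 0 hh, F ![a, b, c] = ∫⁻ x in slab hh, F x := by
  rw [triple hh hF]
  have h1 : ∀ b : ℝ, ∫⁻ a, ∫⁻ c in Ioo 0 hh, F ![a, b, c]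
      = ∫⁻ c in Ioo 0 hh, ∫⁻ a, F ![a, b, c] := by
    intro b
    refine lintegral_lintegral_swap (Measurable.aemeasurable ?_)
    exact meas_vec hF measurable_fst measurable_const measurable_snd
  simp only [h1]
  refine lintegral_lintegral_swap (Measurable.aemeasurable ?_)
  refine Measurable.lintegral_prod_right' (f := fun z : (ℝ × ℝ) × ℝ => F ![z.2, z.1.1, z.1.2]) ?_
  exact meas_vec hF measurable_snd (measurable_fst.comp measurable_fst)
    (measurable_snd.comp measurable_fst)

lemma cs2 {f g : ℝ → ℝ → ℝ≥0∞} (hf : Measurable (Function.uncurry f))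
    (hg : Measurable (Function.uncurry g)) :
    (∫⁻ b, ∫⁻ a, f b a * g b a) ^ 2 ≤ (∫⁻ b, ∫⁻ a, f b a ^ 2) * ∫⁻ b, ∫⁻ a, g b a ^ 2 := by
  rw [lintegral_lintegral (f := fun b a => f b a * g b a) (hf.mul hg).aemeasurable,
    lintegral_lintegral (f := fun b a => f b a ^ 2) (hf.pow_const 2).aemeasurable,
    lintegral_lintegral (f := fun b a => g b a ^ 2) (hg.pow_const 2).aemeasurable]
  exact cs_lint _ hf.aemeasurable hg.aemeasurable

lemma sm_meas {f : R3 → ℝ} (hf : Continuous f) : Measurable fun x => ENNReal.ofReal (f x) :=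
  hf.measurable.ennreal_ofReal

lemma sq_meas {f : R3 → ℝ} (hf : Continuous f) :
    Measurable fun x => ENNReal.ofReal (f x ^ 2) :=
  (hf.pow 2).measurable.ennreal_ofReal

lemma JJ_le_HH1 (hh : ℝ) (f : R3 → ℝ) : JJ hh f ≤ HH1 hh f := le_self_add

lemma JJpd_le_HH1 (hh : ℝ) (f : R3 → ℝ) (i : Fin 3) : JJ hh (pd i f) ≤ HH1 hh f :=
  (Finset.single_le_sum (f := fun i => JJ hh (pd i f)) (fun _ _ => zero_le)
    (Finset.mem_univ i)).trans le_add_self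

lemma lint_le_HH1 {hh : ℝ} {f F : R3 → ℝ} (hf : ContDiff ℝ (⊤ : ℕ∞) f) {k : ℝ} (hk : 0 ≤ k)
    (i : Fin 3) (h : ∀ x, F x ≤ k * (f x ^ 2 + pd i f x ^ 2)) :
    ∫⁻ x in slab hh, ENNReal.ofReal (F x) ≤ ENNReal.ofReal k * HH1 hh f := by
  calc ∫⁻ x in slab hh, ENNReal.ofReal (F x)
      ≤ ∫⁻ x in slab hh, ENNReal.ofReal k * (ENNReal.ofReal (f x ^ 2)
          + ENNReal.ofReal (pd i f x ^ 2)) := by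
        refine lintegral_mono fun x => ?_
        rw [← ENNReal.ofReal_add (sq_nonneg _) (sq_nonneg _), ← ENNReal.ofReal_mul hk]
        exact ENNReal.ofReal_le_ofReal (h x)
    _ = ENNReal.ofReal k * (JJ hh f + JJ hh (pd i f)) := by
        rw [lintegral_const_mul _ (by
          exact (sm_meas (hf.continuous.pow 2)).add
            (sm_meas ((pd_smooth hf i).continuous.pow 2))),
          lintegral_add_left (sq_meas hf.continuous)]
        rfl
    _ ≤ _ := by
        gcongr
        unfold HH1
        gcongr
        exact Finset.single_le_sum (f := fun i => JJ hh (pd i f)) (fun _ _ => zero_le)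
          (Finset.mem_univ i)

lemma slice_sup {hh : ℝ} (hhh : 0 < hh) {φ : R3 → ℝ} (hφ : ContDiff ℝ (⊤ : ℕ∞) φ)
    {c : ℝ} (hc : c ∈ Ioo 0 hh) :
    ∫⁻ b, ∫⁻ a, ENNReal.ofReal (|φ ![a, b, c]|) ^ 2
      ≤ ENNReal.ofReal (hh⁻¹ + 1) * HH1 hh φ := by
  have c0 := hφ.continuous
  have c2 := (pd_smooth hφ 2).continuous
  have hm : Measurable fun x => ENNReal.ofReal (|φ x| * (hh⁻¹ * |φ x| + 2 * |pd 2 φ x|)) :=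
    sm_meas (by fun_prop)
  calc ∫⁻ b, ∫⁻ a, ENNReal.ofReal (|φ ![a, b, c]|) ^ 2
      ≤ ∫⁻ b, ∫⁻ a, ∫⁻ s in Ioo 0 hh, ENNReal.ofReal (|φ ![a, b, s]| *
          (hh⁻¹ * |φ ![a, b, s]| + 2 * |pd 2 φ ![a, b, s]|)) := by
        refine lintegral_mono fun b => lintegral_mono fun a => ?_
        have := oneD (fun s => vec2 hφ a b s)
          (cont_vec c2 continuous_const continuous_const continuous_id) hhh
          (Ioo_subset_Icc_self hc)
        simp only [sub_zero] at this
        rw [← ENNReal.ofReal_pow (abs_nonneg _), sq_abs]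
        exact this
    _ = ∫⁻ x in slab hh, ENNReal.ofReal (|φ x| * (hh⁻¹ * |φ x| + 2 * |pd 2 φ x|)) :=
        triple' hh hm
    _ ≤ _ := by
        refine lint_le_HH1 hφ (by positivity) 2 fun x => ?_
        have : 0 < hh⁻¹ := by positivity
        nlinarith [sq_nonneg (|φ x| - |pd 2 φ x|), sq_abs (φ x), sq_abs (pd 2 φ x),
          sq_nonneg (pd 2 φ x), mul_nonneg this.le (sq_nonneg (pd 2 φ x))]

lemma slice {hh : ℝ} (hhh : 0 < hh) {φ : R3 → ℝ} (hφ : ContDiff ℝ (⊤ : ℕ∞) φ) (i : Fin 3) :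
    ∫⁻ c in Ioo 0 hh, (∫⁻ b, ∫⁻ a, ENNReal.ofReal (|φ ![a, b, c]|) *
        ENNReal.ofReal (|φ ![a, b, c]| + 2 * |pd i φ ![a, b, c]|)) ^ 2
      ≤ ENNReal.ofReal (8 * (hh⁻¹ + 1)) * HH1 hh φ ^ 2 := by
  have c0 := hφ.continuous
  have ci := (pd_smooth hφ i).continuous
  have m1 : Measurable fun x => ENNReal.ofReal (|φ x|) := sm_meas (by fun_prop)
  have m2 : Measurable fun x => ENNReal.ofReal (|φ x| + 2 * |pd i φ x|) := sm_meas (by fun_prop)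
  calc _ ≤ ∫⁻ c in Ioo 0 hh, (ENNReal.ofReal (hh⁻¹ + 1) * HH1 hh φ) *
        ∫⁻ b, ∫⁻ a, ENNReal.ofReal (|φ ![a, b, c]| + 2 * |pd i φ ![a, b, c]|) ^ 2 := by
        refine setLIntegral_mono' measurableSet_Ioo fun c hc => ?_
        refine (cs2 (f := fun b a => ENNReal.ofReal (|φ ![a, b, c]|))
          (g := fun b a => ENNReal.ofReal (|φ ![a, b, c]| + 2 * |pd i φ ![a, b, c]|))
          (meas_vec m1 measurable_snd measurable_fst measurable_const)
          (meas_vec m2 measurable_snd measurable_fst measurable_const)).trans ?_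
        gcongr
        exact slice_sup hhh hφ hc
    _ = (ENNReal.ofReal (hh⁻¹ + 1) * HH1 hh φ) *
        ∫⁻ x in slab hh, ENNReal.ofReal (|φ x| + 2 * |pd i φ x|) ^ 2 := by
        rw [lintegral_const_mul, triple hh (m2.pow_const 2)]
        refine Measurable.lintegral_prod_right' (f := fun z : ℝ × ℝ => ∫⁻ a,
          ENNReal.ofReal (|φ ![a, z.2, z.1]| + 2 * |pd i φ ![a, z.2, z.1]|) ^ 2) ?_
        refine Measurable.lintegral_prod_right' (f := fun z : (ℝ × ℝ) × ℝ =>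
          ENNReal.ofReal (|φ ![z.2, z.1.2, z.1.1]| + 2 * |pd i φ ![z.2, z.1.2, z.1.1]|) ^ 2) ?_
        exact meas_vec (m2.pow_const 2) measurable_snd (measurable_snd.comp measurable_fst)
          (measurable_fst.comp measurable_fst)
    _ ≤ (ENNReal.ofReal (hh⁻¹ + 1) * HH1 hh φ) * (ENNReal.ofReal 8 * HH1 hh φ) := by
        gcongr
        have : ∀ x, ENNReal.ofReal (|φ x| + 2 * |pd i φ x|) ^ 2
            = ENNReal.ofReal ((|φ x| + 2 * |pd i φ x|) ^ 2) := fun x =>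
          (ENNReal.ofReal_pow (by positivity) 2).symm
        simp only [this]
        refine lint_le_HH1 hφ (by norm_num) i fun x => ?_
        nlinarith [sq_nonneg (|φ x| - 2 * |pd i φ x|), sq_abs (φ x), sq_abs (pd i φ x),
          sq_nonneg (φ x)]
    _ = _ := by
        rw [ENNReal.ofReal_mul (by norm_num)]; ring

lemma bilin {hh : ℝ} (hhh : 0 < hh) {φ ψ : R3 → ℝ} (hφ : ContDiff ℝ (⊤ : ℕ∞) φ)
    (hψ : ContDiff ℝ (⊤ : ℕ∞) ψ) :
    JJ hh (fun x => φ x * ψ x) ≤ ENNReal.ofReal (8 * (hh⁻¹ + 1)) * (HH1 hh φ * HH1 hh ψ) := by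
  have c0 := hφ.continuous
  have d0 := hψ.continuous
  have c1 := (pd_smooth hφ 0).continuous
  have d1 := (pd_smooth hψ 1).continuous
  set A : R3 → ℝ≥0∞ := fun x => ENNReal.ofReal (|φ x|) *
        ENNReal.ofReal (|φ x| + 2 * |pd 0 φ x|) with hA
  set B : R3 → ℝ≥0∞ := fun x => ENNReal.ofReal (|ψ x|) *
        ENNReal.ofReal (|ψ x| + 2 * |pd 1 ψ x|) with hB
  have mA : Measurable A := (sm_meas (by fun_prop)).mul (sm_meas (by fun_prop))
  have mB : Measurable B := (sm_meas (by fun_prop)).mul (sm_meas (by fun_prop))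
  have m2 : ∀ F : R3 → ℝ≥0∞, Measurable F → Measurable fun c => ∫⁻ b, ∫⁻ a, F ![a, b, c] := by
    intro F hF
    refine Measurable.lintegral_prod_right' (f := fun z : ℝ × ℝ => ∫⁻ a, F ![a, z.2, z.1]) ?_
    refine Measurable.lintegral_prod_right' (f := fun z : (ℝ × ℝ) × ℝ =>
      F ![z.2, z.1.2, z.1.1]) ?_
    exact meas_vec hF measurable_snd (measurable_snd.comp measurable_fst)
          (measurable_fst.comp measurable_fst)
  have hAp : ∀ a b c : ℝ, ENNReal.ofReal (φ ![a, b, c] ^ 2) ≤ ∫⁻ s, A ![s, b, c] := by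
    intro a b c
    have h := oneD (fun s => vec0 hφ b c s)
      (cont_vec c1 continuous_id continuous_const continuous_const) (p := a) (q := a + 1) (c := a)
      (by linarith) ⟨le_rfl, by linarith⟩
    refine h.trans ((setLIntegral_le_lintegral _ _).trans_eq ?_)
    refine lintegral_congr fun s => ?_
    simp only [hA]
    rw [← ENNReal.ofReal_mul (abs_nonneg _)]
    simp
  have hBp : ∀ a b c : ℝ, ENNReal.ofReal (ψ ![a, b, c] ^ 2) ≤ ∫⁻ s, B ![a, s, c] := by
    intro a b c
    have h := oneD (fun s => vec1 hψ a c s)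
      (cont_vec d1 continuous_const continuous_id continuous_const) (p := b) (q := b + 1) (c := b)
      (by linarith) ⟨le_rfl, by linarith⟩
    refine h.trans ((setLIntegral_le_lintegral _ _).trans_eq ?_)
    refine lintegral_congr fun s => ?_
    simp only [hB]
    rw [← ENNReal.ofReal_mul (abs_nonneg _)]
    simp
  have h1 : JJ hh (fun x => φ x * ψ x) ≤ ∫⁻ c in Ioo 0 hh,
      (∫⁻ b, ∫⁻ a, A ![a, b, c]) * ∫⁻ b, ∫⁻ a, B ![a, b, c] := by
    unfold JJ
    rw [triple hh (sm_meas (by fun_prop))]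
    refine lintegral_mono fun c => ?_
    calc ∫⁻ b, ∫⁻ a, ENNReal.ofReal ((φ ![a, b, c] * ψ ![a, b, c]) ^ 2)
        ≤ ∫⁻ b, ∫⁻ a, (∫⁻ s, A ![s, b, c]) * ∫⁻ s, B ![a, s, c] := by
          refine lintegral_mono fun b => lintegral_mono fun a => ?_
          simp only
          rw [mul_pow, ENNReal.ofReal_mul (sq_nonneg _)]
          exact mul_le_mul' (hAp a b c) (hBp a b c)
      _ = (∫⁻ b, ∫⁻ a, A ![a, b, c]) * ∫⁻ a, ∫⁻ b, B ![a, b, c] := by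
          have e1 : ∀ b, ∫⁻ a, (∫⁻ s, A ![s, b, c]) * ∫⁻ s, B ![a, s, c]
              = (∫⁻ s, A ![s, b, c]) * ∫⁻ a, ∫⁻ s, B ![a, s, c] := by
            intro b
            rw [lintegral_const_mul]
            refine Measurable.lintegral_prod_right' (f := fun z : ℝ × ℝ => B ![z.1, z.2, c]) ?_
            exact meas_vec mB measurable_fst measurable_snd measurable_const
          simp only [e1]
          rw [lintegral_mul_const]
          refine Measurable.lintegral_prod_right' (f := fun z : ℝ × ℝ => A ![z.2, z.1, c]) ?_
          exact meas_vec mA measurable_snd measurable_fst measurable_const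
      _ = _ := by
          congr 1
          refine lintegral_lintegral_swap (Measurable.aemeasurable ?_)
          exact meas_vec mB measurable_fst measurable_snd measurable_const
  have h2 := cs_lint (volume.restrict (Ioo 0 hh)) (m2 A mA).aemeasurable (m2 B mB).aemeasurable
  have h3 : JJ hh (fun x => φ x * ψ x) ^ 2
      ≤ (ENNReal.ofReal (8 * (hh⁻¹ + 1)) * (HH1 hh φ * HH1 hh ψ)) ^ 2 := by
    calc JJ hh (fun x => φ x * ψ x) ^ 2 ≤ _ := pow_le_pow_left' h1 2
      _ ≤ _ := h2
      _ ≤ (ENNReal.ofReal (8 * (hh⁻¹ + 1)) * HH1 hh φ ^ 2) *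
          (ENNReal.ofReal (8 * (hh⁻¹ + 1)) * HH1 hh ψ ^ 2) :=
        mul_le_mul' (slice hhh hφ 0) (slice hhh hψ 1)
      _ = _ := by ring
  exact (ENNReal.pow_le_pow_left_iff (by norm_num)).1 h3

/-! ### The embedding of H² into bounded functions -/

lemma scale_lint {H : ℝ → ℝ≥0∞} (hH : Measurable H) (x0 : ℝ) {s : ℝ} (hs : 0 < s) :
    ENNReal.ofReal s * ∫⁻ a, H (x0 + s * a) = ∫⁻ a, H a := by
  have h := Real.smul_map_volume_mul_left hs.ne'
  calc ENNReal.ofReal s * ∫⁻ a, H (x0 + s * a)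
      = ∫⁻ a, H (x0 + a) ∂(ENNReal.ofReal |s| • Measure.map (s * ·) volume) := by
        rw [lintegral_smul_measure, lintegral_map (by fun_prop) (by fun_prop), abs_of_pos hs]
        rfl
    _ = ∫⁻ a, H (x0 + a) := by rw [h]
    _ = _ := lintegral_add_left_eq_self H x0

/-- pointwise size of the 2-jet -/
noncomputable def jet (f : R3 → ℝ) (x : R3) : ℝ :=
  |f x| + ∑ i, |pd i f x| + ∑ i, ∑ j, |pd i (pd j f) x|

lemma jet_cont {f : R3 → ℝ} (hf : ContDiff ℝ (⊤ : ℕ∞) f) : Continuous (jet f) := by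
  unfold jet
  refine (hf.continuous.abs.add ?_).add ?_
  · exact continuous_finsetSum _ fun i _ => (pd_smooth hf i).continuous.abs
  · exact continuous_finsetSum _ fun i _ => continuous_finsetSum _ fun j _ =>
      (pd_smooth (pd_smooth hf j) i).continuous.abs

lemma jet_nonneg (f : R3 → ℝ) (x : R3) : 0 ≤ jet f x := by
  unfold jet; positivity

lemma jet_sq (f : R3 → ℝ) (x : R3) : jet f x ^ 2
    ≤ 13 * (f x ^ 2 + ∑ i, pd i f x ^ 2 + ∑ i, ∑ j, pd i (pd j f) x ^ 2) := by
  have h1 : (∑ i, |pd i f x|) ^ 2 ≤ 3 * ∑ i, pd i f x ^ 2 := by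
    have := sq_sum_le_card_mul_sum_sq (s := Finset.univ) (f := fun i => |pd i f x|)
    simpa using this
  have h2 : (∑ i, ∑ j, |pd i (pd j f) x|) ^ 2 ≤ 9 * ∑ i, ∑ j, pd i (pd j f) x ^ 2 := by
    have := sq_sum_le_card_mul_sum_sq (s := (Finset.univ : Finset (Fin 3 × Fin 3)))
      (f := fun p => |pd p.1 (pd p.2 f) x|)
    simp only [Fintype.sum_prod_type, sq_abs] at this
    simpa using this
  unfold jet
  have h3 := sq_abs (f x)
  set A := |f x|
  set B := ∑ i, |pd i f x|
  set D := ∑ i, ∑ j, |pd i (pd j f) x|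
  nlinarith [sq_nonneg (3 * A - B), sq_nonneg (9 * A - D), sq_nonneg (3 * B - D)]

lemma jet_lint {hh : ℝ} {f : R3 → ℝ} (hf : ContDiff ℝ (⊤ : ℕ∞) f) :
    ∫⁻ x in slab hh, ENNReal.ofReal (jet f x ^ 2) ≤ ENNReal.ofReal 13 * HH2 hh f := by
  have m0 := sq_meas hf.continuous
  have m1 : ∀ i, Measurable fun x => ENNReal.ofReal (pd i f x ^ 2) :=
    fun i => sq_meas (pd_smooth hf i).continuous
  have m2 : ∀ i j, Measurable fun x => ENNReal.ofReal (pd i (pd j f) x ^ 2) :=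
    fun i j => sq_meas (pd_smooth (pd_smooth hf j) i).continuous
  have M1 : Measurable fun x => ∑ i, ENNReal.ofReal (pd i f x ^ 2) :=
    Finset.measurable_fun_sum _ fun i _ => m1 i
  have M01 : Measurable fun x => ENNReal.ofReal (f x ^ 2) + ∑ i, ENNReal.ofReal (pd i f x ^ 2) :=
    m0.add M1
  have M2 : ∀ i, Measurable fun x => ∑ j, ENNReal.ofReal (pd i (pd j f) x ^ 2) :=
    fun i => Finset.measurable_fun_sum _ fun j _ => m2 i j
  calc ∫⁻ x in slab hh, ENNReal.ofReal (jet f x ^ 2)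
      ≤ ∫⁻ x in slab hh, ENNReal.ofReal 13 * (ENNReal.ofReal (f x ^ 2)
          + ∑ i, ENNReal.ofReal (pd i f x ^ 2) + ∑ i, ∑ j, ENNReal.ofReal (pd i (pd j f) x ^ 2)) := by
        refine lintegral_mono fun x => ?_
        refine (ENNReal.ofReal_le_ofReal (jet_sq f x)).trans_eq ?_
        rw [ENNReal.ofReal_mul (by norm_num), ENNReal.ofReal_add (by positivity) (by positivity),
          ENNReal.ofReal_add (by positivity) (by positivity),
          ENNReal.ofReal_sum_of_nonneg (fun i _ => by positivity),
          ENNReal.ofReal_sum_of_nonneg (fun i _ => by positivity)]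
        congr 2
        refine Finset.sum_congr rfl fun i _ => ?_
        rw [ENNReal.ofReal_sum_of_nonneg (fun i _ => by positivity)]
    _ = _ := by
        rw [lintegral_const_mul' _ _ ENNReal.ofReal_ne_top, lintegral_add_left M01,
          lintegral_add_left m0, lintegral_finsetSum _ (fun i _ => m1 i),
          lintegral_finsetSum _ (fun i _ => M2 i)]
        unfold HH2 HH1 JJ
        congr 2
        refine Finset.sum_congr rfl fun i _ => ?_
        rw [lintegral_finsetSum _ (fun j _ => m2 i j)]

/-- constant in the ray bound -/
noncomputable def rayC (R : ℝ) : ℝ := 1 + 4 / R + 2 / R ^ 2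

lemma ray_bound {f : R3 → ℝ} (hf : ContDiff ℝ (⊤ : ℕ∞) f) (x v : R3) (hv : ∀ i, |v i| ≤ 1)
    {R : ℝ} (hR : 0 < R) :
    |f x| ≤ ∫ s in (0:ℝ)..R, s * (rayC R * jet f (fun i => x i + s * v i)) := by
  set L : ℝ → R3 := fun s i => x i + s * v i with hL
  have hLc : Continuous L := by rw [hL]; fun_prop
  set g : ℝ → ℝ := fun s => f (L s)
  set g1 : ℝ → ℝ := fun s => ∑ i, v i * pd i f (L s)
  set g2 : ℝ → ℝ := fun s => ∑ i, v i * ∑ j, v j * pd j (pd i f) (L s)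
  have d0 : ∀ s, HasDerivAt g (g1 s) s := fun s => line_deriv hf x v s
  have d1 : ∀ s, HasDerivAt g1 (g2 s) s := fun s =>
    HasDerivAt.fun_sum fun i _ => (line_deriv (pd_smooth hf i) x v s).const_mul (v i)
  have c0 : Continuous g := hf.continuous.comp hLc
  have c1 : Continuous g1 := continuous_finsetSum _ fun i _ =>
    continuous_const.mul ((pd_smooth hf i).continuous.comp hLc)
  have c2 : Continuous g2 := continuous_finsetSum _ fun i _ =>
    continuous_const.mul (continuous_finsetSum _ fun j _ =>
      continuous_const.mul ((pd_smooth (pd_smooth hf i) j).continuous.comp hLc))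
  have cj : Continuous fun s => jet f (L s) := (jet_cont hf).comp hLc
  have b1 : ∀ s, |g1 s| ≤ jet f (L s) := by
    intro s
    have : |g1 s| ≤ ∑ i, |pd i f (L s)| := by
      refine (Finset.abs_sum_le_sum_abs _ _).trans (Finset.sum_le_sum fun i _ => ?_)
      rw [abs_mul]
      exact mul_le_of_le_one_left (abs_nonneg _) (hv i)
    have h2 : 0 ≤ ∑ i, ∑ j, |pd i (pd j f) (L s)| := by positivity
    unfold jet
    linarith [abs_nonneg (f (L s))]
  have b2 : ∀ s, |g2 s| ≤ jet f (L s) := by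
    intro s
    have : |g2 s| ≤ ∑ i, ∑ j, |pd j (pd i f) (L s)| := by
      refine (Finset.abs_sum_le_sum_abs _ _).trans (Finset.sum_le_sum fun i _ => ?_)
      rw [abs_mul]
      refine (mul_le_of_le_one_left (abs_nonneg _) (hv i)).trans ?_
      refine (Finset.abs_sum_le_sum_abs _ _).trans (Finset.sum_le_sum fun j _ => ?_)
      rw [abs_mul]
      exact mul_le_of_le_one_left (abs_nonneg _) (hv j)
    rw [Finset.sum_comm] at this
    have h2 : 0 ≤ ∑ i, |pd i f (L s)| := by positivity
    unfold jet
    linarith [abs_nonneg (f (L s))]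
  have b0 : ∀ s, |g s| ≤ jet f (L s) := by
    intro s
    have h1 : 0 ≤ ∑ i, |pd i f (L s)| := by positivity
    have h2 : 0 ≤ ∑ i, ∑ j, |pd i (pd j f) (L s)| := by positivity
    unfold jet
    linarith
  have hg0 : g 0 = f x := by simp [g, hL]
  set X : ℝ → ℝ := fun s => s * (2 / R ^ 2 * g s + 2 * (-2 / R * (1 - s / R)) * g1 s
    + (1 - s / R) ^ 2 * g2 s) with hX
  have hFTC : ∫ s in (0:ℝ)..R, X s = f x := by
    have hE : ∀ s, HasDerivAt (fun s => s * ((-2 / R * (1 - s / R)) * g s + (1 - s / R) ^ 2 * g1 s)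
        - (1 - s / R) ^ 2 * g s) (X s) s := by
      intro s
      have e1 : HasDerivAt (fun s : ℝ => 1 - s / R) (-(1 / R)) s :=
        ((hasDerivAt_id s).div_const R).const_sub 1
      have e2 := ((hasDerivAt_id s).mul (((e1.const_mul (-2 / R)).mul (d0 s)).add
        ((e1.fun_pow 2).mul (d1 s)))).sub ((e1.fun_pow 2).mul (d0 s))
      refine e2.congr_deriv ?_
      simp only [hX, id, Pi.add_apply, Pi.mul_apply, Nat.cast_ofNat, Nat.add_one_sub_one, pow_one]
      field_simp
      ring
    rw [intervalIntegral.integral_eq_sub_of_hasDerivAt (fun s _ => hE s)]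
    · simp [hR.ne', hg0]
    · exact Continuous.intervalIntegrable (by fun_prop) _ _
  rw [← hFTC]
  refine (intervalIntegral.abs_integral_le_integral_abs hR.le).trans ?_
  refine intervalIntegral.integral_mono_on hR.le
    (Continuous.intervalIntegrable (by fun_prop) _ _)
    (Continuous.intervalIntegrable (by fun_prop) _ _) fun s hs => ?_
  have hs0 := hs.1
  have q1 : 0 ≤ 1 - s / R := by
    have : s / R ≤ 1 := (div_le_one hR).2 hs.2
    linarith
  have q2 : 1 - s / R ≤ 1 := by
    have : 0 ≤ s / R := by positivity
    linarith
  simp only [hX]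
  rw [abs_mul, abs_of_nonneg hs0]
  refine mul_le_mul_of_nonneg_left ?_ hs0
  refine (abs_add_three _ _ _).trans ?_
  have hj := jet_nonneg f (L s)
  have t0 : |2 / R ^ 2 * g s| ≤ 2 / R ^ 2 * jet f (L s) := by
    rw [abs_mul, abs_of_nonneg (by positivity)]
    gcongr
    exact b0 s
  have t1 : |2 * (-2 / R * (1 - s / R)) * g1 s| ≤ 4 / R * jet f (L s) := by
    rw [abs_mul]
    refine mul_le_mul ?_ (b1 s) (abs_nonneg _) (by positivity)
    rw [show 2 * (-2 / R * (1 - s / R)) = -(4 / R * (1 - s / R)) by ring, abs_neg,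
      abs_of_nonneg (by positivity)]
    exact mul_le_of_le_one_right (by positivity) q2
  have t2 : |(1 - s / R) ^ 2 * g2 s| ≤ 1 * jet f (L s) := by
    rw [abs_mul]
    refine mul_le_mul ?_ (b2 s) (abs_nonneg _) (by positivity)
    rw [abs_of_nonneg (by positivity)]
    exact pow_le_one₀ q1 q2
  unfold rayC
  linarith

lemma ray_lint {f : R3 → ℝ} (hf : ContDiff ℝ (⊤ : ℕ∞) f) (x v : R3) (hv : ∀ i, |v i| ≤ 1)
    {R : ℝ} (hR : 0 < R) :
    ENNReal.ofReal (f x ^ 2) ≤ ENNReal.ofReal R * ∫⁻ s in Ioo 0 R, ENNReal.ofReal (s ^ 2) *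
      ENNReal.ofReal ((rayC R * jet f (fun i => x i + s * v i)) ^ 2) := by
  have hLc : Continuous fun (s : ℝ) => (fun i => x i + s * v i : R3) := by fun_prop
  have cj : Continuous fun s : ℝ => jet f (fun i => x i + s * v i) := (jet_cont hf).comp hLc
  have hk : 0 ≤ rayC R := by unfold rayC; positivity
  have h := ray_bound hf x v hv hR
  rw [intervalIntegral.integral_of_le hR.le, integral_Ioc_eq_integral_Ioo] at h
  have h1 : ENNReal.ofReal |f x| ≤ ∫⁻ s in Ioo 0 R, 1 *
      ENNReal.ofReal (s * (rayC R * jet f (fun i => x i + s * v i))) := by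
    refine (ENNReal.ofReal_le_ofReal h).trans_eq ?_
    rw [ofReal_integral_eq_lintegral_ofReal]
    · simp
    · exact (Continuous.integrableOn_Icc (a := 0) (b := R) (by fun_prop)).mono_set
        Ioo_subset_Icc_self
    · refine (ae_restrict_iff' measurableSet_Ioo).2 (ae_of_all _ fun s hs => ?_)
      exact mul_nonneg hs.1.le (mul_nonneg hk (jet_nonneg _ _))
  have h2 := cs_lint (volume.restrict (Ioo 0 R)) (f := fun _ => 1)
    (g := fun s => ENNReal.ofReal (s * (rayC R * jet f (fun i => x i + s * v i))))
    aemeasurable_const (Continuous.measurable (by fun_prop)).ennreal_ofReal.aemeasurable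
  calc ENNReal.ofReal (f x ^ 2) = ENNReal.ofReal |f x| ^ 2 := by
        rw [← ENNReal.ofReal_pow (abs_nonneg _), sq_abs]
    _ ≤ _ := (pow_le_pow_left' h1 2).trans h2
    _ = _ := by
        congr 1
        · simp
        · refine setLIntegral_congr_fun measurableSet_Ioo fun s hs => ?_
          rw [← ENNReal.ofReal_pow (mul_nonneg hs.1.le (mul_nonneg hk (jet_nonneg _ _))),
            ← ENNReal.ofReal_mul (sq_nonneg _), mul_pow]

lemma vert_shift {hh R z ε : ℝ} {Φ : ℝ → ℝ≥0∞} (hε : ε = 1 ∨ ε = -1)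
    (hz : ∀ s ∈ Ioo 0 R, z + s * ε ∈ Ioo 0 hh) :
    ∫⁻ s in Ioo 0 R, Φ (z + s * ε) ≤ ∫⁻ c in Ioo 0 hh, Φ c := by
  calc ∫⁻ s in Ioo 0 R, Φ (z + s * ε)
      ≤ ∫⁻ s in Ioo 0 R, (Ioo 0 hh).indicator Φ (z + s * ε) := by
        refine setLIntegral_mono' measurableSet_Ioo fun s hs => ?_
        rw [indicator_of_mem (hz s hs)]
    _ ≤ ∫⁻ s, (Ioo 0 hh).indicator Φ (z + s * ε) := setLIntegral_le_lintegral _ _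
    _ = ∫⁻ s, (Ioo 0 hh).indicator Φ s := by
        rcases hε with rfl | rfl
        · simpa using lintegral_add_left_eq_self ((Ioo 0 hh).indicator Φ) z
        · simpa [← sub_eq_add_neg] using lintegral_sub_left_eq_self ((Ioo 0 hh).indicator Φ) z
    _ = _ := lintegral_indicator measurableSet_Ioo _

/-- constant in the sup bound -/
noncomputable def supC (hh : ℝ) : ℝ := (hh / 2) * (rayC (hh / 2) ^ 2 * 13)

lemma sup_bound {hh : ℝ} (hhh : 0 < hh) {f : R3 → ℝ} (hf : ContDiff ℝ (⊤ : ℕ∞) f)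
    {x : R3} (hx : x ∈ slab hh) :
    ENNReal.ofReal (f x ^ 2) ≤ ENNReal.ofReal (supC hh) * HH2 hh f := by
  set R := hh / 2 with hRdef
  have hR : 0 < R := by positivity
  obtain ⟨ε, hε, hz⟩ : ∃ ε : ℝ, (ε = 1 ∨ ε = -1) ∧ ∀ s ∈ Ioo 0 R, x 2 + s * ε ∈ Ioo 0 hh := by
    have hx1 := hx.1
    have hx2 := hx.2
    rcases le_total (x 2) R with h | h
    · exact ⟨1, Or.inl rfl, fun s hs => ⟨by linarith [hs.1], by linarith [hs.2]⟩⟩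
    · exact ⟨-1, Or.inr rfl, fun s hs => ⟨by linarith [hs.2], by linarith [hs.1]⟩⟩
  set G : R3 → ℝ≥0∞ := fun y => ENNReal.ofReal ((rayC R * jet f y) ^ 2) with hG
  have mG : Measurable G := sq_meas (continuous_const.mul (jet_cont hf))
  have h1 : ∀ b ∈ Ioo (0:ℝ) 1, ∀ a ∈ Ioo (0:ℝ) 1, ENNReal.ofReal (f x ^ 2) ≤ ENNReal.ofReal R *
      ∫⁻ s in Ioo 0 R, ENNReal.ofReal (s ^ 2) * G ![x 0 + s * a, x 1 + s * b, x 2 + s * ε] := by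
    intro b hb a ha
    have := ray_lint hf x ![a, b, ε] ?_ hR
    · refine this.trans_eq ?_
      congr 1
      refine lintegral_congr fun s => ?_
      congr 1
      have : (fun i => x i + s * (![a, b, ε] : R3) i) = ![x 0 + s * a, x 1 + s * b, x 2 + s * ε] := by
        ext i; fin_cases i <;> simp
      rw [this]
    · intro i
      fin_cases i
      · simpa [abs_le] using ⟨by linarith [ha.1], ha.2.le⟩
      · simpa [abs_le] using ⟨by linarith [hb.1], hb.2.le⟩
      · rcases hε with h | h <;> simp [h]
  have msq : Measurable fun s : ℝ => ENNReal.ofReal (s ^ 2) := by fun_prop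
  calc ENNReal.ofReal (f x ^ 2)
      = ∫⁻ b in Ioo (0:ℝ) 1, ∫⁻ a in Ioo (0:ℝ) 1, ENNReal.ofReal (f x ^ 2) := by simp
    _ ≤ ∫⁻ b in Ioo (0:ℝ) 1, ∫⁻ a in Ioo (0:ℝ) 1, ENNReal.ofReal R *
      ∫⁻ s in Ioo 0 R, ENNReal.ofReal (s ^ 2) * G ![x 0 + s * a, x 1 + s * b, x 2 + s * ε] :=
        setLIntegral_mono' measurableSet_Ioo fun b hb =>
          setLIntegral_mono' measurableSet_Ioo fun a ha => h1 b hb a ha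
    _ ≤ ∫⁻ b, ∫⁻ a, ENNReal.ofReal R *
      ∫⁻ s in Ioo 0 R, ENNReal.ofReal (s ^ 2) * G ![x 0 + s * a, x 1 + s * b, x 2 + s * ε] :=
        (setLIntegral_le_lintegral _ _).trans
          (lintegral_mono fun b => setLIntegral_le_lintegral _ _)
    _ = ENNReal.ofReal R * ∫⁻ s in Ioo 0 R, ∫⁻ b, ∫⁻ a,
        ENNReal.ofReal (s ^ 2) * G ![x 0 + s * a, x 1 + s * b, x 2 + s * ε] := by
        have mm : Measurable fun z : (ℝ × ℝ) × ℝ => ENNReal.ofReal (z.2 ^ 2) *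
            G ![x 0 + z.2 * z.1.2, x 1 + z.2 * z.1.1, x 2 + z.2 * ε] :=
          (msq.comp measurable_snd).mul (meas_vec mG (by fun_prop) (by fun_prop) (by fun_prop))
        have e1 : ∀ b, ∫⁻ a, ENNReal.ofReal R * ∫⁻ s in Ioo 0 R, ENNReal.ofReal (s ^ 2) *
              G ![x 0 + s * a, x 1 + s * b, x 2 + s * ε]
            = ENNReal.ofReal R * ∫⁻ s in Ioo 0 R, ∫⁻ a, ENNReal.ofReal (s ^ 2) *
              G ![x 0 + s * a, x 1 + s * b, x 2 + s * ε] := by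
          intro b
          rw [lintegral_const_mul' _ _ ENNReal.ofReal_ne_top]
          congr 1
          refine lintegral_lintegral_swap (Measurable.aemeasurable ?_)
          exact mm.comp ((measurable_const.prodMk measurable_fst).prodMk measurable_snd)
        simp only [e1]
        rw [lintegral_const_mul' _ _ ENNReal.ofReal_ne_top]
        congr 1
        refine lintegral_lintegral_swap (Measurable.aemeasurable ?_)
        refine Measurable.lintegral_prod_right' (f := fun z : (ℝ × ℝ) × ℝ =>
          ENNReal.ofReal (z.1.2 ^ 2) *
            G ![x 0 + z.1.2 * z.2, x 1 + z.1.2 * z.1.1, x 2 + z.1.2 * ε]) ?_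
        exact (msq.comp (measurable_snd.comp measurable_fst)).mul
          (meas_vec mG (by fun_prop) (by fun_prop) (by fun_prop))
    _ = ENNReal.ofReal R * ∫⁻ s in Ioo 0 R, ∫⁻ b, ∫⁻ a, G ![a, b, x 2 + s * ε] := by
        congr 1
        refine setLIntegral_congr_fun measurableSet_Ioo fun s hs => ?_
        have hs0 : 0 < s := hs.1
        have e2 : ∀ b : ℝ, ∫⁻ a, ENNReal.ofReal (s ^ 2) *
              G ![x 0 + s * a, x 1 + s * b, x 2 + s * ε]
            = ENNReal.ofReal s * ∫⁻ a, G ![a, x 1 + s * b, x 2 + s * ε] := by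
          intro b
          rw [lintegral_const_mul' _ _ ENNReal.ofReal_ne_top, sq, ENNReal.ofReal_mul hs0.le,
            mul_assoc]
          congr 1
          exact scale_lint (H := fun a => G ![a, x 1 + s * b, x 2 + s * ε])
            (meas_vec mG measurable_id measurable_const measurable_const) (x 0) hs0
        simp only [e2]
        rw [lintegral_const_mul' _ _ ENNReal.ofReal_ne_top]
        refine scale_lint (H := fun b => ∫⁻ a, G ![a, b, x 2 + s * ε]) ?_ (x 1) hs0
        refine Measurable.lintegral_prod_right' (f := fun z : ℝ × ℝ =>
          G ![z.2, z.1, x 2 + s * ε]) ?_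
        exact meas_vec mG measurable_snd measurable_fst measurable_const
    _ ≤ ENNReal.ofReal R * ∫⁻ c in Ioo 0 hh, ∫⁻ b, ∫⁻ a, G ![a, b, c] := by
        refine mul_le_mul' le_rfl ?_
        exact vert_shift (Φ := fun c => ∫⁻ b, ∫⁻ a, G ![a, b, c]) hε hz
    _ = ENNReal.ofReal R * ∫⁻ y in slab hh, G y := by rw [triple hh mG]
    _ ≤ ENNReal.ofReal R * (ENNReal.ofReal (rayC R ^ 2) * (ENNReal.ofReal 13 * HH2 hh f)) := by
        gcongr
        simp only [hG, mul_pow, ENNReal.ofReal_mul (sq_nonneg (rayC R))]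
        rw [lintegral_const_mul' _ _ ENNReal.ofReal_ne_top]
        gcongr
        exact jet_lint hf
    _ = _ := by
        unfold supC
        rw [ENNReal.ofReal_mul hR.le, ENNReal.ofReal_mul (sq_nonneg _)]
        ring

lemma JJ_sup_mul {hh : ℝ} (hhh : 0 < hh) {f : R3 → ℝ} (hf : ContDiff ℝ (⊤ : ℕ∞) f) (g : R3 → ℝ)
    (hg : Continuous g) :
    JJ hh (fun x => f x * g x) ≤ ENNReal.ofReal (supC hh) * (HH2 hh f * JJ hh g) := by
  unfold JJ
  calc ∫⁻ x in slab hh, ENNReal.ofReal ((f x * g x) ^ 2)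
      ≤ ∫⁻ x in slab hh, (ENNReal.ofReal (supC hh) * HH2 hh f) * ENNReal.ofReal (g x ^ 2) := by
        refine setLIntegral_mono' (slab_meas hh) fun x hx => ?_
        rw [mul_pow, ENNReal.ofReal_mul (sq_nonneg _)]
        gcongr
        exact sup_bound hhh hf hx
    _ = _ := by
        rw [lintegral_const_mul _ (sq_meas hg), mul_assoc]

/-! ### Algebra of the L² functional -/

lemma JJ_add {hh : ℝ} {f : R3 → ℝ} (hf : Continuous f) (g : R3 → ℝ) :
    JJ hh (fun x => f x + g x) ≤ 2 * (JJ hh f + JJ hh g) := by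
  unfold JJ
  rw [← lintegral_add_left (sq_meas hf), ← lintegral_const_mul' _ _ (by norm_num)]
  refine lintegral_mono fun x => ?_
  rw [← ENNReal.ofReal_add (sq_nonneg _) (sq_nonneg _),
    show (2 : ℝ≥0∞) = ENNReal.ofReal 2 by simp, ← ENNReal.ofReal_mul (by norm_num)]
  refine ENNReal.ofReal_le_ofReal ?_
  nlinarith [sq_nonneg (f x - g x)]

lemma JJ_cmul {hh : ℝ} (c : ℝ) (f : R3 → ℝ) :
    JJ hh (fun x => c * f x) = ENNReal.ofReal (c ^ 2) * JJ hh f := by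
  unfold JJ
  rw [← lintegral_const_mul' _ _ ENNReal.ofReal_ne_top]
  refine lintegral_congr fun x => ?_
  rw [mul_pow, ENNReal.ofReal_mul (sq_nonneg _)]

lemma JJ_congr {hh : ℝ} {f g : R3 → ℝ} (h : ∀ x ∈ slab hh, f x = g x) : JJ hh f = JJ hh g :=
  setLIntegral_congr_fun (slab_meas hh) fun x hx => by simp only [h x hx]

lemma JJ_sum {hh : ℝ} {f : Fin 3 → R3 → ℝ} (hf : ∀ i, Continuous (f i)) :
    JJ hh (fun x => ∑ i, f i x) ≤ 3 * ∑ i, JJ hh (f i) := by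
  unfold JJ
  rw [← lintegral_finsetSum _ (fun i _ => sq_meas (hf i)),
    ← lintegral_const_mul' _ _ (by norm_num)]
  refine lintegral_mono fun x => ?_
  rw [← ENNReal.ofReal_sum_of_nonneg (fun i _ => sq_nonneg _),
    show (3 : ℝ≥0∞) = ENNReal.ofReal 3 by simp, ← ENNReal.ofReal_mul (by norm_num)]
  refine ENNReal.ofReal_le_ofReal ?_
  have := sq_sum_le_card_mul_sum_sq (s := Finset.univ) (f := fun i => f i x)
  simpa using this

lemma JJ_rbar {hh : ℝ} (f : R3 → ℝ) :
    JJ hh (fun x => rbar x * f x) ≤ ENNReal.ofReal ((hh + 1) ^ 2) * JJ hh f := by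
  unfold JJ
  rw [← lintegral_const_mul' _ _ ENNReal.ofReal_ne_top]
  refine setLIntegral_mono' (slab_meas hh) fun x hx => ?_
  rw [mul_pow, ENNReal.ofReal_mul (sq_nonneg _)]
  refine mul_le_mul' (ENNReal.ofReal_le_ofReal ?_) le_rfl
  have h1 := hx.1
  have h2 := hx.2
  unfold rbar
  exact pow_le_pow_left₀ (by linarith) (by linarith) 2

lemma HH1_pd_le (hh : ℝ) (f : R3 → ℝ) (m : Fin 3) : HH1 hh (pd m f) ≤ HH2 hh f := by
  unfold HH2
  rw [Finset.sum_comm]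
  refine add_le_add (JJpd_le_HH1 hh f m) ?_
  exact Finset.single_le_sum (f := fun j => ∑ i, JJ hh (pd i (pd j f))) (fun _ _ => zero_le)
    (Finset.mem_univ m)

lemma JJ_lap_le {hh : ℝ} {w : R3 → ℝ} (hw : ContDiff ℝ (⊤ : ℕ∞) w) :
    JJ hh (lap w) ≤ 3 * HH2 hh w := by
  refine (JJ_sum (f := fun i => pd i (pd i w))
    fun i => (pd_smooth (pd_smooth hw i) i).continuous).trans ?_
  refine mul_le_mul' le_rfl ?_
  unfold HH2
  refine le_trans (Finset.sum_le_sum fun i _ => ?_) le_add_self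
  exact Finset.single_le_sum (f := fun j => JJ hh (pd i (pd j w))) (fun _ _ => zero_le)
    (Finset.mem_univ i)

/-! ### The convective derivative -/

/-- material derivative -/
noncomputable def Dm (U V : Fin 3 → R3 → ℝ) (k : Fin 3) : R3 → ℝ :=
  fun x => V k x + ∑ i, U i x * pd i (U k) x

/-- the size of the acceleration -/
noncomputable def WW (hh : ℝ) (U V : Fin 3 → R3 → ℝ) : ℝ≥0∞ :=
  ∑ k, HH1 hh (V k) + (∑ k, HH2 hh (U k)) * ∑ i, ∑ k, HH1 hh (pd i (U k))

/-- common Sobolev constant -/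
noncomputable def KK (hh : ℝ) : ℝ≥0∞ :=
  ENNReal.ofReal (8 * (hh⁻¹ + 1)) + ENNReal.ofReal (supC hh)

lemma bilinK {hh : ℝ} (hhh : 0 < hh) {φ ψ : R3 → ℝ} (hφ : ContDiff ℝ (⊤ : ℕ∞) φ)
    (hψ : ContDiff ℝ (⊤ : ℕ∞) ψ) :
    JJ hh (fun x => φ x * ψ x) ≤ KK hh * (HH1 hh φ * HH1 hh ψ) :=
  (bilin hhh hφ hψ).trans (mul_le_mul' le_self_add le_rfl)

lemma supK {hh : ℝ} (hhh : 0 < hh) {f g : R3 → ℝ} (hf : ContDiff ℝ (⊤ : ℕ∞) f)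
    (hg : ContDiff ℝ (⊤ : ℕ∞) g) :
    JJ hh (fun x => f x * g x) ≤ KK hh * (HH2 hh f * JJ hh g) :=
  (JJ_sup_mul hhh hf g hg.continuous).trans (mul_le_mul' le_add_self le_rfl)

lemma Dm_smooth {U V : Fin 3 → R3 → ℝ} (hU : ∀ k, ContDiff ℝ (⊤ : ℕ∞) (U k))
    (hV : ∀ k, ContDiff ℝ (⊤ : ℕ∞) (V k)) (k : Fin 3) : ContDiff ℝ (⊤ : ℕ∞) (Dm U V k) :=
  (hV k).add (ContDiff.sum fun i _ => (hU i).mul (pd_smooth (hU k) i))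

lemma pd_Dm {U V : Fin 3 → R3 → ℝ} (hU : ∀ k, ContDiff ℝ (⊤ : ℕ∞) (U k))
    (hV : ∀ k, ContDiff ℝ (⊤ : ℕ∞) (V k)) (m k : Fin 3) :
    pd m (Dm U V k) = fun x => pd m (V k) x +
      ∑ i, (pd m (U i) x * pd i (U k) x + U i x * pd m (pd i (U k)) x) := by
  funext x
  unfold Dm
  rw [pd_add (hV k) (ContDiff.sum fun i _ => (hU i).mul (pd_smooth (hU k) i)),
    pd_sum (fun i => (hU i).mul (pd_smooth (hU k) i))]
  congr 1
  refine Finset.sum_congr rfl fun i _ => ?_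
  exact pd_mul (hU i) (pd_smooth (hU k) i) m x

lemma le_VV (hh : ℝ) (U : Fin 3 → R3 → ℝ) (i : Fin 3) : HH2 hh (U i) ≤ ∑ k, HH2 hh (U k) :=
  Finset.single_le_sum (f := fun k => HH2 hh (U k)) (fun _ _ => zero_le) (Finset.mem_univ i)

lemma le_GG (hh : ℝ) (U : Fin 3 → R3 → ℝ) (i k : Fin 3) :
    HH1 hh (pd i (U k)) ≤ ∑ i, ∑ k, HH1 hh (pd i (U k)) :=
  (Finset.single_le_sum (f := fun k => HH1 hh (pd i (U k))) (fun _ _ => zero_le)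
    (Finset.mem_univ k)).trans
  (Finset.single_le_sum (f := fun i => ∑ k, HH1 hh (pd i (U k))) (fun _ _ => zero_le)
    (Finset.mem_univ i))

lemma JJ_Dm {hh : ℝ} (hhh : 0 < hh) {U V : Fin 3 → R3 → ℝ}
    (hU : ∀ k, ContDiff ℝ (⊤ : ℕ∞) (U k)) (hV : ∀ k, ContDiff ℝ (⊤ : ℕ∞) (V k)) (k : Fin 3) :
    JJ hh (Dm U V k) ≤ (2 + 36 * KK hh) * WW hh U V := by
  set VV := ∑ k, HH2 hh (U k) with hVV
  set GG := ∑ i, ∑ k, HH1 hh (pd i (U k)) with hGG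
  have h1 : JJ hh (V k) ≤ ∑ k, HH1 hh (V k) := (JJ_le_HH1 _ _).trans
    (Finset.single_le_sum (f := fun k => HH1 hh (V k)) (fun _ _ => zero_le) (Finset.mem_univ k))
  have h2 : ∀ i, JJ hh (fun x => U i x * pd i (U k) x) ≤ KK hh * (VV * GG) := fun i =>
    (supK hhh (hU i) (pd_smooth (hU k) i)).trans (mul_le_mul' le_rfl
      (mul_le_mul' (le_VV hh U i) ((JJ_le_HH1 _ _).trans (le_GG hh U i k))))
  calc JJ hh (Dm U V k) ≤ 2 * (JJ hh (V k) + JJ hh (fun x => ∑ i, U i x * pd i (U k) x)) :=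
        JJ_add (hV k).continuous _
    _ ≤ 2 * (∑ k, HH1 hh (V k) + 3 * ∑ i : Fin 3, KK hh * (VV * GG)) := by
        refine mul_le_mul' le_rfl (add_le_add h1 ?_)
        refine (JJ_sum fun i => ((hU i).mul (pd_smooth (hU k) i)).continuous).trans ?_
        exact mul_le_mul' le_rfl (Finset.sum_le_sum fun i _ => h2 i)
    _ = 2 * ∑ k, HH1 hh (V k) + 18 * KK hh * (VV * GG) := by
        simp only [Finset.sum_const, Finset.card_univ, Fintype.card_fin, nsmul_eq_mul]
        push_cast
        ring
    _ ≤ (2 + 36 * KK hh) * ∑ k, HH1 hh (V k) + (2 + 36 * KK hh) * (VV * GG) := by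
        refine add_le_add (mul_le_mul' le_self_add le_rfl) (mul_le_mul' ?_ le_rfl)
        refine le_trans ?_ le_add_self
        gcongr
        norm_num
    _ = _ := by rw [← mul_add]; rfl

lemma JJ_pd_Dm {hh : ℝ} (hhh : 0 < hh) {U V : Fin 3 → R3 → ℝ}
    (hU : ∀ k, ContDiff ℝ (⊤ : ℕ∞) (U k)) (hV : ∀ k, ContDiff ℝ (⊤ : ℕ∞) (V k)) (m k : Fin 3) :
    JJ hh (pd m (Dm U V k)) ≤ (2 + 72 * KK hh) * WW hh U V := by
  set VV := ∑ k, HH2 hh (U k) with hVV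
  set GG := ∑ i, ∑ k, HH1 hh (pd i (U k)) with hGG
  have h1 : JJ hh (pd m (V k)) ≤ ∑ k, HH1 hh (V k) := (JJpd_le_HH1 _ _ _).trans
    (Finset.single_le_sum (f := fun k => HH1 hh (V k)) (fun _ _ => zero_le) (Finset.mem_univ k))
  have h2 : ∀ i, JJ hh (fun x => U i x * pd m (pd i (U k)) x) ≤ KK hh * (VV * GG) := fun i =>
    (supK hhh (hU i) (pd_smooth (pd_smooth (hU k) i) m)).trans (mul_le_mul' le_rfl
      (mul_le_mul' (le_VV hh U i) ((JJpd_le_HH1 _ _ _).trans (le_GG hh U i k))))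
  have h3 : ∀ i, JJ hh (fun x => pd m (U i) x * pd i (U k) x) ≤ KK hh * (VV * GG) := fun i =>
    (bilinK hhh (pd_smooth (hU i) m) (pd_smooth (hU k) i)).trans (mul_le_mul' le_rfl
      (mul_le_mul' ((HH1_pd_le _ _ _).trans (le_VV hh U i)) (le_GG hh U i k)))
  rw [pd_Dm hU hV]
  calc _ ≤ 2 * (JJ hh (pd m (V k)) + JJ hh (fun x =>
          ∑ i, (pd m (U i) x * pd i (U k) x + U i x * pd m (pd i (U k)) x))) :=
        JJ_add (pd_smooth (hV k) m).continuous _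
    _ ≤ 2 * (∑ k, HH1 hh (V k) + 3 * ∑ i : Fin 3, 2 * (KK hh * (VV * GG) + KK hh * (VV * GG))) := by
        refine mul_le_mul' le_rfl (add_le_add h1 ?_)
        refine (JJ_sum fun i => (((pd_smooth (hU i) m).mul (pd_smooth (hU k) i)).add
          ((hU i).mul (pd_smooth (pd_smooth (hU k) i) m))).continuous).trans ?_
        refine mul_le_mul' le_rfl (Finset.sum_le_sum fun i _ => ?_)
        refine (JJ_add ((pd_smooth (hU i) m).mul (pd_smooth (hU k) i)).continuous _).trans ?_
        exact mul_le_mul' le_rfl (add_le_add (h3 i) (h2 i))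
    _ = 2 * ∑ k, HH1 hh (V k) + 72 * KK hh * (VV * GG) := by
        simp only [Finset.sum_const, Finset.card_univ, Fintype.card_fin, nsmul_eq_mul]
        push_cast
        ring
    _ ≤ (2 + 72 * KK hh) * ∑ k, HH1 hh (V k) + (2 + 72 * KK hh) * (VV * GG) :=
        add_le_add (mul_le_mul' le_self_add le_rfl) (mul_le_mul' le_add_self le_rfl)
    _ = _ := by rw [← mul_add]; rfl

/-- constant for the acceleration -/
noncomputable def K1 (hh : ℝ) : ℝ≥0∞ := 4 * (2 + 72 * KK hh)

lemma HH1_Dm {hh : ℝ} (hhh : 0 < hh) {U V : Fin 3 → R3 → ℝ}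
    (hU : ∀ k, ContDiff ℝ (⊤ : ℕ∞) (U k)) (hV : ∀ k, ContDiff ℝ (⊤ : ℕ∞) (V k)) (k : Fin 3) :
    HH1 hh (Dm U V k) ≤ K1 hh * WW hh U V := by
  unfold HH1
  calc _ ≤ (2 + 72 * KK hh) * WW hh U V + ∑ _i : Fin 3, (2 + 72 * KK hh) * WW hh U V := by
        refine add_le_add ((JJ_Dm hhh hU hV k).trans ?_)
          (Finset.sum_le_sum fun i _ => JJ_pd_Dm hhh hU hV i k)
        gcongr
        norm_num
    _ = _ := by
        simp only [Finset.sum_const, Finset.card_univ, Fintype.card_fin, nsmul_eq_mul, K1]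
        push_cast
        ring

/-! ### The vorticity identity -/

lemma pd_congr {hh : ℝ} {f g : R3 → ℝ} (h : ∀ x ∈ slab hh, f x = g x) (i : Fin 3) :
    ∀ x ∈ slab hh, pd i f x = pd i g x := by
  intro x hx
  have : f =ᶠ[𝓝 x] g := by
    filter_upwards [(slab_open hh).mem_nhds hx] with y hy using h y hy
  unfold pd
  rw [this.fderiv_eq]

lemma rho_smooth (κ : ℝ) {s : R3 → ℝ} (hs : ContDiff ℝ (⊤ : ℕ∞) s) :
    ContDiff ℝ (⊤ : ℕ∞) (rho κ s) :=
  (coord_smooth.add contDiff_const).add (contDiff_const.mul hs)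

lemma pd_rho (κ : ℝ) {s : R3 → ℝ} (hs : ContDiff ℝ (⊤ : ℕ∞) s) (j : Fin 3) (x : R3) :
    pd j (rho κ s) x = (if j = 2 then 1 else 0) + κ⁻¹ * pd j s x := by
  unfold rho rbar
  rw [pd_add (coord_smooth.add contDiff_const) (contDiff_const.mul hs), pd_cmul hs]
  congr 1
  simp only [add_comm _ (1:ℝ)]
  rw [pd_cadd]
  unfold pd
  rw [show (fun y : R3 => y 2) = (ContinuousLinearMap.proj (R := ℝ) (φ := fun _ : Fin 3 => ℝ) 2)
    from rfl, ContinuousLinearMap.fderiv]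
  simp [unitv, eq_comm]

lemma vort {hh μ κ : ℝ} {s b : R3 → ℝ} {U D : Fin 3 → R3 → ℝ}
    (hs : ContDiff ℝ (⊤ : ℕ∞) s) (hb : ContDiff ℝ (⊤ : ℕ∞) b)
    (hU : ∀ k, ContDiff ℝ (⊤ : ℕ∞) (U k)) (hD : ∀ k, ContDiff ℝ (⊤ : ℕ∞) (D k))
    (heq : ∀ x ∈ slab hh, ∀ j : Fin 3, rho κ s x * D j x + pd j b x
      = μ * lap (U j) x - lap s x * ((if j = 2 then κ else 0) + pd j s x))
    (j : Fin 3) (hj : j ≠ 2) : ∀ x ∈ slab hh,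
    κ * pd j (lap s) x = μ * pd j (lap (U 2)) x + ((-μ) * pd 2 (lap (U j)) x
      + ((-1) * (pd 2 s x * pd j (lap s) x) + (1 * (pd j s x * pd 2 (lap s) x)
      + (rbar x * (pd 2 (D j) x - pd j (D 2) x) + (κ⁻¹ * (s x * (pd 2 (D j) x - pd j (D 2) x))
      + ((-κ⁻¹) * (pd j s x * D 2 x) + (κ⁻¹ * (pd 2 s x * D j x) + D j x))))))) := by
  intro x hx
  have hr := rho_smooth κ hs
  have hl := lap_smooth hs
  have gen : ∀ i k : Fin 3, pd i (rho κ s) x * D k x + rho κ s x * pd i (D k) x + pd i (pd k b) x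
      = μ * pd i (lap (U k)) x - (pd i (lap s) x * ((if k = 2 then κ else 0) + pd k s x)
        + lap s x * pd i (pd k s) x) := by
    intro i k
    have h := pd_congr (f := fun x => rho κ s x * D k x + pd k b x)
      (g := fun x => μ * lap (U k) x - lap s x * ((if k = 2 then κ else 0) + pd k s x))
      (fun x hx => heq x hx k) i x hx
    rw [pd_add (hr.mul (hD k)) (pd_smooth hb k), pd_mul hr (hD k),
      pd_sub (contDiff_const.mul (lap_smooth (hU k)))
        (hl.mul (contDiff_const.add (pd_smooth hs k))), pd_cmul (lap_smooth (hU k)),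
      pd_mul hl (contDiff_const.add (pd_smooth hs k)), pd_cadd] at h
    exact h
  have g1 := gen j 2
  have g2 := gen 2 j
  rw [pd_rho κ hs] at g1 g2
  rw [pd_comm hb 2 j, pd_comm hs 2 j] at g2
  simp only [hj, if_true, if_false] at g1 g2
  have hrho : rho κ s x = rbar x + κ⁻¹ * s x := rfl
  rw [hrho] at g1 g2
  linarith

/-! ### The basic estimate -/

lemma JJ_chain {hh : ℝ} {f g : R3 → ℝ} {B c : ℝ≥0∞} (hf : Continuous f) (h1 : JJ hh f ≤ B)
    (h2 : JJ hh g ≤ c * B) : JJ hh (fun x => f x + g x) ≤ (2 * (1 + c)) * B :=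
  (JJ_add hf g).trans (by
    rw [mul_assoc, add_mul, one_mul]
    exact mul_le_mul' le_rfl (add_le_add h1 h2))

/-- constant of the basic estimate -/
noncomputable def MM (hh μ : ℝ) : ℝ≥0∞ :=
  ENNReal.ofReal (μ ^ 2) + (3 * KK hh + (ENNReal.ofReal ((hh + 1) ^ 2) + (KK hh + 1)) * K1 hh)

lemma KK_ne_top (hh : ℝ) : KK hh ≠ ⊤ := by unfold KK; finiteness

lemma MM_ne_top (hh μ : ℝ) : MM hh μ ≠ ⊤ := by
  have := KK_ne_top hh
  unfold MM K1
  finiteness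

lemma basic {hh μ κ : ℝ} (hhh : 0 < hh) {s b : R3 → ℝ} {U V : Fin 3 → R3 → ℝ}
    (hs : ContDiff ℝ (⊤ : ℕ∞) s) (hb : ContDiff ℝ (⊤ : ℕ∞) b)
    (hU : ∀ k, ContDiff ℝ (⊤ : ℕ∞) (U k)) (hV : ∀ k, ContDiff ℝ (⊤ : ℕ∞) (V k))
    (heq : ∀ x ∈ slab hh, ∀ j : Fin 3, rho κ s x * Dm U V j x + pd j b x
      = μ * lap (U j) x - lap s x * ((if j = 2 then κ else 0) + pd j s x))
    (j : Fin 3) (hj : j ≠ 2) :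
    ENNReal.ofReal (κ ^ 2) * JJ hh (pd j (lap s)) ≤ 766 * (MM hh μ *
      (∑ i, ∑ k, JJ hh (pd i (lap (U k))) + (HH2 hh (pd j s) * HH2 hh (pd 2 s)
        + (1 + ENNReal.ofReal (κ⁻¹ ^ 2) * HH2 hh s) * WW hh U V))) := by
  set D := Dm U V with hDdef
  have hD : ∀ k, ContDiff ℝ (⊤ : ℕ∞) (D k) := fun k => Dm_smooth hU hV k
  set L := ∑ i, ∑ k, JJ hh (pd i (lap (U k))) with hL
  set A := HH2 hh (pd j s) * HH2 hh (pd 2 s) with hA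
  set q := ENNReal.ofReal (κ⁻¹ ^ 2) with hq
  set W := WW hh U V with hW
  set H := HH2 hh s with hH
  set Y := L + (A + (1 + q * H) * W) with hY
  set M := MM hh μ with hM
  have hl := lap_smooth hs
  have cs : Continuous s := hs.continuous
  have cp : ∀ i, Continuous (pd i s) := fun i => (pd_smooth hs i).continuous
  have cpl : ∀ i, Continuous (pd i (lap s)) := fun i => (pd_smooth hl i).continuous
  have cU : ∀ i k, Continuous (pd i (lap (U k))) :=
    fun i k => (pd_smooth (lap_smooth (hU k)) i).continuous
  have cD : ∀ k, Continuous (D k) := fun k => (hD k).continuous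
  have cE : ContDiff ℝ (⊤ : ℕ∞) (fun x => pd 2 (D j) x - pd j (D 2) x) :=
    (pd_smooth (hD j) 2).sub (pd_smooth (hD 2) j)
  have cr : Continuous rbar := (coord_smooth.continuous).add continuous_const
  have hLY : ∀ i k, JJ hh (pd i (lap (U k))) ≤ Y := fun i k =>
    ((Finset.single_le_sum (f := fun k => JJ hh (pd i (lap (U k)))) (fun _ _ => zero_le)
      (Finset.mem_univ k)).trans
    (Finset.single_le_sum (f := fun i => ∑ k, JJ hh (pd i (lap (U k)))) (fun _ _ => zero_le)
      (Finset.mem_univ i))).trans le_self_add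
  have hAY : A ≤ Y := le_add_left le_self_add
  have hWY : W ≤ Y := by
    refine le_add_left (le_add_left ?_)
    rw [add_mul, one_mul]; exact le_self_add
  have hHY : q * H * W ≤ Y := by
    refine le_add_left (le_add_left ?_)
    rw [add_mul]; exact le_add_self
  have m1 : ENNReal.ofReal (μ ^ 2) ≤ M := le_self_add
  have m2 : 3 * KK hh ≤ M := le_add_left le_self_add
  have m3 : ENNReal.ofReal ((hh + 1) ^ 2) * K1 hh ≤ M := by
    refine le_add_left (le_add_left ?_)
    rw [add_mul]; exact le_self_add
  have m4 : KK hh * K1 hh ≤ M := by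
    refine le_add_left (le_add_left ?_)
    rw [add_mul, add_mul]; exact le_add_left le_self_add
  have m5 : K1 hh ≤ M := by
    refine le_add_left (le_add_left ?_)
    rw [add_mul, add_mul, one_mul]; exact le_add_left le_add_self
  have hE : JJ hh (fun x => pd 2 (D j) x - pd j (D 2) x) ≤ K1 hh * W := by
    have e : (fun x => pd 2 (D j) x - pd j (D 2) x)
        = fun x => pd 2 (D j) x + (-1) * pd j (D 2) x := by funext x; ring
    rw [e]
    refine (JJ_add (pd_smooth (hD j) 2).continuous _).trans ?_
    rw [JJ_cmul]
    calc _ ≤ 2 * ((2 + 72 * KK hh) * W + ENNReal.ofReal ((-1) ^ 2) * ((2 + 72 * KK hh) * W)) := by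
          gcongr
          · exact JJ_pd_Dm hhh hU hV 2 j
          · exact JJ_pd_Dm hhh hU hV j 2
      _ = K1 hh * W := by
          simp only [even_two, Even.neg_pow, one_pow, ENNReal.ofReal_one, K1]; ring
  have hplap : ∀ i, JJ hh (pd i (lap s)) ≤ 3 * HH2 hh (pd i s) := fun i => by
    rw [pd_lap hs]; exact JJ_lap_le (pd_smooth hs i)
  have b1 : JJ hh (fun x => μ * pd j (lap (U 2)) x) ≤ M * Y := by
    rw [JJ_cmul]; exact mul_le_mul' m1 (hLY _ _)
  have b2 : JJ hh (fun x => (-μ) * pd 2 (lap (U j)) x) ≤ M * Y := by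
    rw [JJ_cmul, neg_sq]; exact mul_le_mul' m1 (hLY _ _)
  have b3 : JJ hh (fun x => (-1) * (pd 2 s x * pd j (lap s) x)) ≤ M * Y := by
    rw [JJ_cmul, neg_sq, one_pow, ENNReal.ofReal_one, one_mul]
    refine (supK hhh (pd_smooth hs 2) (pd_smooth hl j)).trans ?_
    calc _ ≤ KK hh * (HH2 hh (pd 2 s) * (3 * HH2 hh (pd j s))) := by gcongr; exact hplap j
      _ = 3 * KK hh * A := by rw [hA]; ring
      _ ≤ _ := mul_le_mul' m2 hAY
  have b4 : JJ hh (fun x => 1 * (pd j s x * pd 2 (lap s) x)) ≤ M * Y := by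
    rw [JJ_cmul, one_pow, ENNReal.ofReal_one, one_mul]
    refine (supK hhh (pd_smooth hs j) (pd_smooth hl 2)).trans ?_
    calc _ ≤ KK hh * (HH2 hh (pd j s) * (3 * HH2 hh (pd 2 s))) := by gcongr; exact hplap 2
      _ = 3 * KK hh * A := by rw [hA]; ring
      _ ≤ _ := mul_le_mul' m2 hAY
  have b5 : JJ hh (fun x => rbar x * (pd 2 (D j) x - pd j (D 2) x)) ≤ M * Y := by
    refine (JJ_rbar _).trans ((mul_le_mul' le_rfl hE).trans ?_)
    rw [← mul_assoc]
    exact mul_le_mul' m3 hWY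
  have b6 : JJ hh (fun x => κ⁻¹ * (s x * (pd 2 (D j) x - pd j (D 2) x))) ≤ M * Y := by
    rw [JJ_cmul]
    calc _ ≤ q * (KK hh * (H * (K1 hh * W))) := by
          gcongr; exact (supK hhh hs cE).trans (by gcongr)
      _ = KK hh * K1 hh * (q * H * W) := by ring
      _ ≤ _ := mul_le_mul' m4 hHY
  have b7 : ∀ i k, q * JJ hh (fun x => pd i s x * D k x) ≤ M * Y := fun i k => by
    calc _ ≤ q * (KK hh * (H * (K1 hh * W))) := by
          gcongr
          refine (bilinK hhh (pd_smooth hs i) (hD k)).trans ?_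
          gcongr
          · exact HH1_pd_le hh s i
          · exact HH1_Dm hhh hU hV k
      _ = KK hh * K1 hh * (q * H * W) := by ring
      _ ≤ _ := mul_le_mul' m4 hHY
  have b8 : JJ hh (fun x => (-κ⁻¹) * (pd j s x * D 2 x)) ≤ M * Y := by
    rw [JJ_cmul, neg_sq]; exact b7 j 2
  have b9 : JJ hh (fun x => κ⁻¹ * (pd 2 s x * D j x)) ≤ M * Y := by
    rw [JJ_cmul]; exact b7 2 j
  have b10 : JJ hh (fun x => D j x) ≤ 1 * (M * Y) := by
    rw [one_mul]
    exact ((JJ_le_HH1 _ _).trans (HH1_Dm hhh hU hV j)).trans (mul_le_mul' m5 hWY)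
  rw [← JJ_cmul, JJ_congr (vort hs hb hU hD heq j hj)]
  have c5 := cE.continuous
  have := JJ_chain (by fun_prop) b1 (JJ_chain (by fun_prop) b2 (JJ_chain (by fun_prop) b3
    (JJ_chain (by fun_prop) b4 (JJ_chain (cr.mul c5) b5 (JJ_chain
      (continuous_const.mul (cs.mul c5)) b6
    (JJ_chain (by fun_prop) b8 (JJ_chain (by fun_prop) b9 b10)))))))
  refine this.trans (le_of_eq ?_)
  congr 1
  norm_num

/-! ### Comparison with the Sobolev norms -/

lemma sum_snoc {n : ℕ} (F : (Fin (n + 1) → Fin 3) → ℝ) :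
    ∑ α, F α = ∑ i : Fin 3, ∑ α : Fin n → Fin 3, F (Fin.snoc (α := fun _ => Fin 3) α i) := by
  rw [← (Fin.snocEquiv (fun _ : Fin (n + 1) => Fin 3)).sum_comp, Fintype.sum_prod_type]
  rfl

lemma pdL_snoc {n : ℕ} (α : Fin n → Fin 3) (i : Fin 3) (f : R3 → ℝ) :
    pdL (List.ofFn (Fin.snoc (α := fun _ => Fin 3) α i)) f = pdL (List.ofFn α) (pd i f) := by
  rw [List.ofFn_succ', List.concat_eq_append]
  simp only [Fin.snoc_castSucc, Fin.snoc_last]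
  rw [pdL_append]

lemma HSq_zero (hh : ℝ) (f : R3 → ℝ) : HSq hh 0 f = L2sq hh f := by
  simp [HSq, pdL]

lemma HSq_succ (hh : ℝ) (k : ℕ) (f : R3 → ℝ) :
    HSq hh (k + 1) f = L2sq hh f + ∑ i, HSq hh k (pd i f) := by
  unfold HSq
  rw [Finset.sum_range_succ', add_comm]
  congr 1
  · simp [pdL]
  · rw [Finset.sum_comm]
    refine Finset.sum_congr rfl fun n _ => ?_
    rw [sum_snoc]
    refine Finset.sum_congr rfl fun i _ => Finset.sum_congr rfl fun α _ => ?_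
    rw [pdL_snoc]

lemma HSq_nonneg (hh : ℝ) (k : ℕ) (f : R3 → ℝ) : 0 ≤ HSq hh k f :=
  Finset.sum_nonneg fun _ _ => Finset.sum_nonneg fun _ _ => L2sq_nonneg' _ _

lemma HSq_one (hh : ℝ) (f : R3 → ℝ) : HSq hh 1 f = L2sq hh f + ∑ i, L2sq hh (pd i f) := by
  rw [HSq_succ]; simp only [HSq_zero]

lemma HSq_two (hh : ℝ) (f : R3 → ℝ) : HSq hh 2 f
    = L2sq hh f + ∑ i, L2sq hh (pd i f) + ∑ i, ∑ j, L2sq hh (pd i (pd j f)) := by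
  rw [HSq_succ]; simp only [HSq_one, Finset.sum_add_distrib]
  rw [Finset.sum_comm]; ring

lemma HSq_pd_le (hh : ℝ) (k : ℕ) (f : R3 → ℝ) (i : Fin 3) :
    HSq hh k (pd i f) ≤ HSq hh (k + 1) f := by
  rw [HSq_succ]
  have h1 := Finset.single_le_sum (f := fun i => HSq hh k (pd i f))
    (fun _ _ => HSq_nonneg _ _ _) (Finset.mem_univ i)
  have h2 := L2sq_nonneg' hh f
  linarith

lemma JJ_eq {hh : ℝ} {f : R3 → ℝ} (hf : IntegrableOn (fun x => f x ^ 2) (slab hh) volume) :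
    JJ hh f = ENNReal.ofReal (L2sq hh f) :=
  (ofReal_integral_eq_lintegral_ofReal hf (ae_of_all _ fun _ => sq_nonneg _)).symm

lemma HH1_eq {hh : ℝ} {f : R3 → ℝ} (hf : DReg hh f) :
    HH1 hh f = ENNReal.ofReal (HSq hh 1 f) := by
  rw [HSq_one, ENNReal.ofReal_add (L2sq_nonneg' _ _)
    (Finset.sum_nonneg fun _ _ => L2sq_nonneg' _ _),
    ENNReal.ofReal_sum_of_nonneg fun _ _ => L2sq_nonneg' _ _]
  simp only [HH1, JJ_eq hf.sq, fun i => JJ_eq (hf.pd i).sq]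

lemma HH2_eq {hh : ℝ} {f : R3 → ℝ} (hf : DReg hh f) :
    HH2 hh f = ENNReal.ofReal (HSq hh 2 f) := by
  have n2 : ∀ i, 0 ≤ ∑ j, L2sq hh (pd i (pd j f)) :=
    fun i => Finset.sum_nonneg fun _ _ => L2sq_nonneg' _ _
  rw [HSq_two, ← HSq_one, ENNReal.ofReal_add (HSq_nonneg _ _ _) (Finset.sum_nonneg fun i _ => n2 i),
    ENNReal.ofReal_sum_of_nonneg fun i _ => n2 i, ← HH1_eq hf]
  simp only [HH2, fun i => ENNReal.ofReal_sum_of_nonneg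
    (f := fun j => L2sq hh (pd i (pd j f))) (s := Finset.univ) fun j _ => L2sq_nonneg' _ _]
  simp only [fun i j => JJ_eq ((hf.pd j).pd i).sq]

lemma ofReal_sum' {f : Fin 3 → ℝ} (hf : ∀ i, 0 ≤ f i) :
    ∑ i, ENNReal.ofReal (f i) = ENNReal.ofReal (∑ i, f i) :=
  (ENNReal.ofReal_sum_of_nonneg fun i _ => hf i).symm

lemma enn_real {M : ℝ≥0∞} {k p q L a b H T V G : ℝ} (hM : M ≠ ⊤) (hk : 0 ≤ k) (hq : 0 ≤ q)
    (hL : 0 ≤ L) (ha : 0 ≤ a) (hb : 0 ≤ b) (hH : 0 ≤ H) (hT : 0 ≤ T) (hV : 0 ≤ V) (hG : 0 ≤ G)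
    (h : ENNReal.ofReal k * ENNReal.ofReal p ≤ 766 * (M * (ENNReal.ofReal L +
      (ENNReal.ofReal a * ENNReal.ofReal b + (1 + ENNReal.ofReal q * ENNReal.ofReal H) *
        (ENNReal.ofReal T + ENNReal.ofReal V * ENNReal.ofReal G))))) :
    k * p ≤ 766 * (M.toReal * (L + (a * b + (1 + q * H) * (T + V * G)))) := by
  lift M to NNReal using hM
  have e : (766 : ℝ≥0∞) * (M * (ENNReal.ofReal L +
      (ENNReal.ofReal a * ENNReal.ofReal b + (1 + ENNReal.ofReal q * ENNReal.ofReal H) *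
        (ENNReal.ofReal T + ENNReal.ofReal V * ENNReal.ofReal G))))
      = ENNReal.ofReal (766 * ((M : ℝ) * (L + (a * b + (1 + q * H) * (T + V * G))))) := by
    lift L to NNReal using hL
    lift a to NNReal using ha
    lift b to NNReal using hb
    lift H to NNReal using hH
    lift T to NNReal using hT
    lift V to NNReal using hV
    lift G to NNReal using hG
    lift q to NNReal using hq
    simp only [ENNReal.ofReal_coe_nnreal]
    rw [show (766 * ((M : ℝ) * (L + (a * b + (1 + q * H) * (T + V * G)))) : ℝ)
      = ((766 * (M * (L + (a * b + (1 + q * H) * (T + V * G)))) : NNReal) : ℝ) by push_cast; rfl,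
      ENNReal.ofReal_coe_nnreal]
    push_cast
    rfl
  rw [e, ← ENNReal.ofReal_mul hk] at h
  exact (ENNReal.ofReal_le_ofReal_iff (by positivity)).1 h

/-- real form of the basic estimate -/
lemma basic_real {hh μ κ : ℝ} (hhh : 0 < hh) {s b : R3 → ℝ} {U V : Fin 3 → R3 → ℝ}
    (hs : DReg hh s) (hb : ContDiff ℝ (⊤ : ℕ∞) b)
    (hU : ∀ k, DReg hh (U k)) (hV : ∀ k, DReg hh (V k))
    (heq : ∀ x ∈ slab hh, ∀ j : Fin 3, rho κ s x * Dm U V j x + pd j b x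
      = μ * lap (U j) x - lap s x * ((if j = 2 then κ else 0) + pd j s x))
    (hbd : ∀ x ∈ bdry hh, s x = 0)
    (j : Fin 3) (hj : j ≠ 2) :
    κ ^ 2 * HSq hh 2 (pd j s) ≤ (16 * hh ^ 4 + 4 * hh ^ 2 + 1) * (766 * (MM hh μ).toReal) *
      (∑ i, ∑ k, L2sq hh (pd i (lap (U k))) + (HSq hh 2 (pd j s) * HSq hh 3 s
        + (1 + κ⁻¹ ^ 2 * HSq hh 2 s) * (∑ k, HSq hh 1 (V k)
          + (∑ k, HSq hh 2 (U k)) * ∑ i, ∑ k, HSq hh 1 (pd i (U k))))) := by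
  have h := basic hhh hs.1 hb (fun k => (hU k).1) (fun k => (hV k).1) heq j hj
  have eL : ∀ i k, JJ hh (pd i (lap (U k))) = ENNReal.ofReal (L2sq hh (pd i (lap (U k)))) := by
    intro i k
    refine JJ_eq ?_
    rw [pd_lap (hU k).1]
    exact ((hU k).pd i).lap
  have n1 : ∀ k f, 0 ≤ HSq hh k f := HSq_nonneg hh
  have n0 : ∀ f, 0 ≤ L2sq hh f := L2sq_nonneg' hh
  have hreal : κ ^ 2 * L2sq hh (pd j (lap s)) ≤ 766 * ((MM hh μ).toReal *
      (∑ i, ∑ k, L2sq hh (pd i (lap (U k))) + (HSq hh 2 (pd j s) * HSq hh 2 (pd 2 s)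
        + (1 + κ⁻¹ ^ 2 * HSq hh 2 s) * (∑ k, HSq hh 1 (V k)
          + (∑ k, HSq hh 2 (U k)) * ∑ i, ∑ k, HSq hh 1 (pd i (U k)))))) := by
    unfold WW at h
    have e1 : JJ hh (pd j (lap s)) = ENNReal.ofReal (L2sq hh (pd j (lap s))) := by
      refine JJ_eq ?_
      rw [pd_lap hs.1]
      exact (hs.pd j).lap
    have n2 : ∀ i, 0 ≤ ∑ k, L2sq hh (pd i (lap (U k))) := fun i =>
      Finset.sum_nonneg fun k _ => n0 _
    have n3 : ∀ i, 0 ≤ ∑ k, HSq hh 1 (pd i (U k)) := fun i =>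
      Finset.sum_nonneg fun k _ => n1 _ _
    have n4 := Finset.sum_nonneg fun k (_ : k ∈ Finset.univ) => n1 1 (V k)
    have n5 := Finset.sum_nonneg fun k (_ : k ∈ Finset.univ) => n1 2 (U k)
    have n6 := Finset.sum_nonneg fun k (_ : k ∈ Finset.univ) => n2 k
    have n7 := Finset.sum_nonneg fun k (_ : k ∈ Finset.univ) => n3 k
    have n8 := n1 2 (pd j s)
    have n9 := n1 2 (pd 2 s)
    have n10 := n1 2 s
    simp only [eL, HH2_eq hs, HH2_eq (hs.pd j), HH2_eq (hs.pd 2), fun k => HH2_eq (hU k),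
      fun k => HH1_eq (hV k), fun i k => HH1_eq ((hU k).pd i), e1] at h
    simp only [fun i => ofReal_sum' fun k => n0 (pd i (lap (U k))), ofReal_sum' n2,
      ofReal_sum' fun k => n1 1 (V k), ofReal_sum' fun k => n1 2 (U k),
      fun i => ofReal_sum' fun k => n1 1 (pd i (U k)), ofReal_sum' n3] at h
    exact enn_real (MM_ne_top hh μ) (sq_nonneg _) (sq_nonneg _) n6 n8 n9 n10 n4 n5 n7 h
  have he := elliptic hhh (hs.pd j) (pd_bdry hs.1 hbd j hj)
  rw [← HSq_two, ← pd_lap hs.1] at he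
  set Ce := 16 * hh ^ 4 + 4 * hh ^ 2 + 1
  have hCe : 0 ≤ Ce := by positivity
  calc κ ^ 2 * HSq hh 2 (pd j s) ≤ κ ^ 2 * (Ce * L2sq hh (pd j (lap s))) := by gcongr
    _ = Ce * (κ ^ 2 * L2sq hh (pd j (lap s))) := by ring
    _ ≤ Ce * (766 * ((MM hh μ).toReal *
      (∑ i, ∑ k, L2sq hh (pd i (lap (U k))) + (HSq hh 2 (pd j s) * HSq hh 3 s
        + (1 + κ⁻¹ ^ 2 * HSq hh 2 s) * (∑ k, HSq hh 1 (V k)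
          + (∑ k, HSq hh 2 (U k)) * ∑ i, ∑ k, HSq hh 1 (pd i (U k))))))) := by
        refine mul_le_mul_of_nonneg_left (hreal.trans ?_) hCe
        have := HSq_pd_le hh 2 s 2
        have n8 := n1 2 (pd j s)
        have n11 : 0 ≤ (MM hh μ).toReal := ENNReal.toReal_nonneg
        gcongr
    _ = _ := by ring

lemma sqrt_step {κ c a L S H UT V G : ℝ} (hκ : 0 < κ) (hc : 0 ≤ c) (ha : 0 ≤ a) (hL : 0 ≤ L)
    (hS : 0 ≤ S) (hH : 0 ≤ H) (hT : 0 ≤ UT) (hV : 0 ≤ V) (hG : 0 ≤ G)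
    (h : κ ^ 2 * a ≤ c * (L + (a * S + (1 + κ⁻¹ ^ 2 * H) * (UT + V * G)))) :
    √a ≤ √c * (κ⁻¹ * (√L + √a * √S) + (κ⁻¹ + κ⁻¹ ^ 2 * √H) * (√UT + √V * √G)) := by
  have hk : 0 < κ⁻¹ := inv_pos.2 hκ
  refine Real.sqrt_le_iff.2 ⟨by positivity, ?_⟩
  have h1 : a ≤ c * (κ⁻¹ ^ 2 * (L + (a * S + (1 + κ⁻¹ ^ 2 * H) * (UT + V * G)))) := by
    have e : a = κ⁻¹ ^ 2 * (κ ^ 2 * a) := by field_simp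
    rw [e]
    nth_rw 2 [← e]
    calc _ ≤ κ⁻¹ ^ 2 * (c * (L + (a * S + (1 + κ⁻¹ ^ 2 * H) * (UT + V * G)))) := by gcongr
      _ = _ := by ring
  refine h1.trans ?_
  rw [mul_pow, Real.sq_sqrt hc]
  refine mul_le_mul_of_nonneg_left ?_ hc
  have sL := Real.sq_sqrt hL
  have sa := Real.sq_sqrt ha
  have sS := Real.sq_sqrt hS
  have sH := Real.sq_sqrt hH
  have sT := Real.sq_sqrt hT
  have sV := Real.sq_sqrt hV
  have sG := Real.sq_sqrt hG
  have pL := Real.sqrt_nonneg L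
  have pa := Real.sqrt_nonneg a
  have pS := Real.sqrt_nonneg S
  have pH := Real.sqrt_nonneg H
  have pT := Real.sqrt_nonneg UT
  have pV := Real.sqrt_nonneg V
  have pG := Real.sqrt_nonneg G
  generalize √L = l at *
  generalize √a = a' at *
  generalize √S = s' at *
  generalize √H = h' at *
  generalize √UT = t' at *
  generalize √V = v' at *
  generalize √G = g' at *
  subst sL sa sS sH sT sV sG
  generalize κ⁻¹ = k at *
  have add2 : ∀ x y : ℝ, 0 ≤ x → 0 ≤ y → x ^ 2 + y ^ 2 ≤ (x + y) ^ 2 := by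
    intro x y hx hy; nlinarith [mul_nonneg hx hy]
  calc _ = k ^ 2 * (l ^ 2 + (a' * s') ^ 2)
        + (k ^ 2 + (k ^ 2 * h') ^ 2) * (t' ^ 2 + (v' * g') ^ 2) := by ring
    _ ≤ k ^ 2 * (l + a' * s') ^ 2 + (k + k ^ 2 * h') ^ 2 * (t' + v' * g') ^ 2 := by
        gcongr
        · exact add2 _ _ pL (by positivity)
        · exact add2 _ _ hk.le (by positivity)
        · exact add2 _ _ pT (by positivity)
    _ = (k * (l + a' * s')) ^ 2 + ((k + k ^ 2 * h') * (t' + v' * g')) ^ 2 := by ring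
    _ ≤ _ := add2 _ _ (by positivity) (by positivity)

/-- dissipation estimate for horizontal derivatives of σ,
    Lemma 2.4, (2.43). -/
theorem horizontal_dissipation_estimate (hh μ d : ℝ)
    (hhh : 0 < hh) (hμ : 0 < μ) (hd : 0 < d) :
    ∃ C : ℝ, 0 < C ∧
      ∀ (κ T : ℝ), 0 < κ → 0 < T →
      ∀ (σ : ℝ → R3 → ℝ) (u : ℝ → R3 → Fin 3 → ℝ) (β : ℝ → R3 → ℝ),
        SReg hh σ → VReg hh u → SReg hh β →
        (∀ t ∈ Set.Ioo (0:ℝ) T, NSK hh μ κ σ u β t) →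
        (∀ t ∈ Set.Ioo (0:ℝ) T, NavierBC hh u t) →
        (∀ t ∈ Set.Ioo (0:ℝ) T, ∀ x ∈ bdry hh,
          σ t x = 0 ∧ pd 2 (pd 2 (σ t)) x = 0) →
        ∀ t ∈ Set.Ioo (0:ℝ) T,
          anisoNorm hh 1 2 (σ t)
            ≤ C * (κ⁻¹ * (Real.sqrt (∑ i : Fin 3, ∑ j : Fin 3,
                    L2sq hh (pd i (lap (fun y => u t y j))))
                  + anisoNorm hh 1 2 (σ t) * Hnorm hh 3 (σ t))
                + (κ⁻¹ + (κ⁻¹) ^ 2 * Hnorm hh 2 (σ t))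
                    * (utNorm hh 1 u t + VHnorm hh 2 (u t) * GradNorm hh 1 (u t))) := by
  set c := (16 * hh ^ 4 + 4 * hh ^ 2 + 1) * (766 * (MM hh μ).toReal) with hcdef
  have hc : 0 ≤ c := by
    have : 0 ≤ (MM hh μ).toReal := ENNReal.toReal_nonneg
    positivity
  refine ⟨2 * √c + 1, by positivity, ?_⟩
  intro κ T hκ _ σ u β hσ hu hβ hN _ hB t ht
  have hsq : ∀ (k : ℕ) (f : R3 → ℝ), 0 ≤ HSq hh k f := HSq_nonneg hh
  have key : ∀ j : Fin 3, j ≠ 2 → Hnorm hh 2 (pd j (σ t)) ≤ √c *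
      (κ⁻¹ * (√(∑ i : Fin 3, ∑ j : Fin 3, L2sq hh (pd i (lap (fun y => u t y j))))
        + Hnorm hh 2 (pd j (σ t)) * Hnorm hh 3 (σ t))
        + (κ⁻¹ + κ⁻¹ ^ 2 * Hnorm hh 2 (σ t))
          * (utNorm hh 1 u t + VHnorm hh 2 (u t) * GradNorm hh 1 (u t))) := by
    intro j hj
    have h := basic_real (μ := μ) (κ := κ) hhh (hσ.dreg t) (hβ.dreg t).1
      (U := fun k y => u t y k) (V := fun k => dt (uc u k) t)
      (fun k => (hu k).dreg t) (fun k => (hu k).dt t)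
      (fun x hx j => (hN t ht x hx).2.1 j) (fun x hx => (hB t ht x hx).1) j hj
    exact sqrt_step hκ hc (hsq _ _)
      (Finset.sum_nonneg fun _ _ => Finset.sum_nonneg fun _ _ => L2sq_nonneg' _ _)
      (hsq _ _) (hsq _ _) (Finset.sum_nonneg fun _ _ => hsq _ _)
      (Finset.sum_nonneg fun _ _ => hsq _ _)
      (Finset.sum_nonneg fun _ _ => Finset.sum_nonneg fun _ _ => hsq _ _) h
  have hA : anisoNorm hh 1 2 (σ t) = Hnorm hh 2 (pd 1 (σ t)) + Hnorm hh 2 (pd 0 (σ t)) := by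
    simp [anisoNorm, Finset.sum_range_succ, pdIter]
  have k0 := key 0 (by decide)
  have k1 := key 1 (by decide)
  have p0 : 0 ≤ Hnorm hh 2 (pd 0 (σ t)) := Real.sqrt_nonneg _
  have p1 : 0 ≤ Hnorm hh 2 (pd 1 (σ t)) := Real.sqrt_nonneg _
  have p2 : 0 ≤ Hnorm hh 3 (σ t) := Real.sqrt_nonneg _
  have p3 : 0 ≤ Hnorm hh 2 (σ t) := Real.sqrt_nonneg _
  have p4 : 0 ≤ utNorm hh 1 u t := Real.sqrt_nonneg _
  have p5 : 0 ≤ VHnorm hh 2 (u t) := Real.sqrt_nonneg _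
  have p6 : 0 ≤ GradNorm hh 1 (u t) := Real.sqrt_nonneg _
  rw [hA]
  have p7 := Real.sqrt_nonneg (∑ i : Fin 3, ∑ j : Fin 3,
    L2sq hh (pd i (lap (fun y => u t y j))))
  generalize √(∑ i : Fin 3, ∑ j : Fin 3, L2sq hh (pd i (lap (fun y => u t y j)))) = L at *
  generalize Hnorm hh 2 (pd 0 (σ t)) = a0 at *
  generalize Hnorm hh 2 (pd 1 (σ t)) = a1 at *
  generalize Hnorm hh 3 (σ t) = S at *
  generalize Hnorm hh 2 (σ t) = H at *
  have hk : 0 < κ⁻¹ := inv_pos.2 hκ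
  have hr := Real.sqrt_nonneg c
  set Z := (κ⁻¹ + κ⁻¹ ^ 2 * H) * (utNorm hh 1 u t + VHnorm hh 2 (u t) * GradNorm hh 1 (u t))
    with hZ
  have hZ0 : 0 ≤ Z := by positivity
  set X := κ⁻¹ * (L + (a1 + a0) * S) + Z with hX
  have hX0 : 0 ≤ X := by positivity
  have q0 : a0 ≤ √c * X := k0.trans (by rw [hX]; gcongr; linarith)
  have q1 : a1 ≤ √c * X := k1.trans (by rw [hX]; gcongr; linarith)
  nlinarith
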